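/- Cauchy's estimates with L¹ norm: assume m > 4. Let α, β ∈ ℕ^m be multi-indices. There exists a constant c_{α,β,m,k} > 0, depending only on α, β, m, k, with the following property: for every open set Ω ⊆ ℝ^m, every f ∈ C²(Ω×𝔹^m, ℋ_k) with 𝒟_k f = 0 in Ω × 𝔹^m, every a ∈ Ω and r₁ > 0 with the closed ball B̄(a,r₁) contained in Ω, and every ν₀ ∈ 𝔹^m with r₂ := 1 − |ν₀| (the distance from ν₀ to 𝕊^{m-1}), one has |D_ν^β D_x^α f(a,ν₀)| ≤ c_{α,β,m,k} · ‖f‖_{L¹(B(a,r₁)×B(0,1−r₂/4))} / (r₁^{m+|α|} r₂^{m+|β|}), where ‖f‖_{L¹(B(a,r₁)×B(0,1−r₂/4))} := ∫_{B(a,r₁)} ∫_{B(0,1−r₂/4)} |f(x,ν)| dν dx with Lebesgue measure in both variables. -/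

import Mathlib

noncomputable section

open MeasureTheory Metric Filter Topology
open scoped RealInnerProductSpace

/-- `ℝ^m` as a Euclidean space. -/
abbrev Evec (m : ℕ) : Type := EuclideanSpace ℝ (Fin m)

/-- Partial derivative in the `i`-th coordinate direction. -/
def pdv {m : ℕ} (i : Fin m) (f : Evec m → ℝ) (x : Evec m) : ℝ :=
  fderiv ℝ f x (EuclideanSpace.single i 1)

/-- Euclidean Laplacian on `ℝ^m`. -/
def lapl {m : ℕ} (f : Evec m → ℝ) (x : Evec m) : ℝ :=
  ∑ i : Fin m, pdv i (pdv i f) x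

/-- `p` is a real-valued polynomial function on `ℝ^m`, homogeneous of degree `k` and
harmonic; i.e. `p ∈ ℋ_k`. -/
def IsHk (m k : ℕ) (p : Evec m → ℝ) : Prop :=
  (∃ P : MvPolynomial (Fin m) ℝ, ∀ x : Evec m, p x = MvPolynomial.eval (fun i => x i) P) ∧
  (∀ (c : ℝ) (x : Evec m), p (c • x) = c ^ k * p x) ∧
  (∀ x : Evec m, lapl p x = 0)

/-- The surface measure `dS` on the unit sphere `𝕊^{m-1}`, as a measure on `ℝ^m`. -/
def sphereM (m : ℕ) : Measure (Evec m) :=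
  Measure.map Subtype.val ((volume : Measure (Evec m)).toSphere)

/-- `ω_m`, the surface area of the unit sphere `𝕊^{m-1}`. -/
def omegaS (m : ℕ) : ℝ := (sphereM m Set.univ).toReal

/-- The constant `c_{m,k} = 2(m+2k-2)/((m-2)ω_m)`. -/
def cmk (m k : ℕ) : ℝ := 2 * ((m : ℝ) + 2 * k - 2) / (((m : ℝ) - 2) * omegaS m)

/-- The reflection `R_a(u) = u - 2⟨a,u⟩a/|a|²` (in Clifford notation `a u a/|a|²`). -/
def reflv {m : ℕ} (a u : Evec m) : Evec m :=
  u - (2 * ⟪a, u⟫ / ‖a‖ ^ 2) • a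

/-- `dim ℋ_k`. -/
def hdim (m k : ℕ) : ℕ :=
  Nat.choose (m + k - 1) (m - 1) - Nat.choose (m + k - 3) (m - 1)

/-- `Z` is the reproducing kernel `Z_k` of `ℋ_k` on the unit sphere: a symmetric,
rotation invariant kernel, bounded by `dim ℋ_k` on the unit ball, belonging to `ℋ_k`
in the first variable and reproducing elements of `ℋ_k` from their spherical values. -/
def IsZk (m k : ℕ) (Z : Evec m → Evec m → ℝ) : Prop :=
  (∀ v : Evec m, IsHk m k (fun u => Z u v)) ∧
  (∀ p : Evec m → ℝ, IsHk m k p → ∀ v : Evec m, (∫ u, Z u v * p u ∂(sphereM m)) = p v) ∧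
  (∀ u v : Evec m, Z u v = Z v u) ∧
  (∀ u v : Evec m, ‖u‖ ≤ 1 → ‖v‖ ≤ 1 → |Z u v| ≤ (hdim m k : ℝ)) ∧
  (∀ (A : Evec m ≃ₗᵢ[ℝ] Evec m) (u v : Evec m), Z (A u) (A v) = Z u v)

/-- The point `(x', y) ∈ ℝ^{d+1}` with first `d` coordinates `x'` and last coordinate `y`. -/
def upP (d : ℕ) (x' : Evec d) (y : ℝ) : Evec (d + 1) :=
  (EuclideanSpace.equiv (Fin (d + 1)) ℝ).symm
    (Fin.snoc (⇑(EuclideanSpace.equiv (Fin d) ℝ) x') y)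

/-- The first `d` coordinates of a point of `ℝ^{d+1}`. -/
def downP (d : ℕ) (x : Evec (d + 1)) : Evec d :=
  (EuclideanSpace.equiv (Fin d) ℝ).symm (fun i => x (Fin.castSucc i))

/-- The last coordinate of a point of `ℝ^{d+1}`. -/
def lastP (d : ℕ) (x : Evec (d + 1)) : ℝ := x (Fin.last d)

/-- The Poisson kernel `P_H` for bosonic Laplacians in the upper half-space `ℝ^{d+1}_+`,
`P_H(x,t,u,v) = c_{m,k} (y/|x-t|^m) Z_k(R_{x-t}(u), v)` with `m = d+1`, `x = (x',y)`,
`t = (t',0)`. -/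
def PH (d k : ℕ) (Z : Evec (d + 1) → Evec (d + 1) → ℝ) (x' : Evec d) (y : ℝ)
    (t' : Evec d) (u v : Evec (d + 1)) : ℝ :=
  cmk (d + 1) k * (y / ‖upP d x' y - upP d t' 0‖ ^ (d + 1)) *
    Z (reflv (upP d x' y - upP d t' 0) u) v

/-- The Poisson integral `P_H[f]` in the upper half-space. -/
def PHint (d k : ℕ) (Z : Evec (d + 1) → Evec (d + 1) → ℝ)
    (f : Evec d → Evec (d + 1) → ℝ) (x' : Evec d) (y : ℝ) (v : Evec (d + 1)) : ℝ :=
  ∫ t' : Evec d, (∫ u, PH d k Z x' y t' u v * f t' u ∂(sphereM (d + 1)))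

/-- The Poisson kernel `P_B` for bosonic Laplacians in the unit ball. -/
def PB (m k : ℕ) (Z : Evec m → Evec m → ℝ) (x ζ ω ν : Evec m) : ℝ :=
  (cmk m k / 2) * ((1 - ‖x‖ ^ 2) / ‖x - ζ‖ ^ m) * Z (reflv (x - ζ) ω) ν

/-- The Poisson integral `P_B[h]` in the unit ball. -/
def PBint (m k : ℕ) (Z : Evec m → Evec m → ℝ) (h : Evec m → Evec m → ℝ)
    (x ν : Evec m) : ℝ :=
  ∫ ζ, (∫ ω, PB m k Z x ζ ω ν * h ζ ω ∂(sphereM m)) ∂(sphereM m)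

/-- Partial derivative in the first (`x`) variable. -/
def pd1 {m : ℕ} (i : Fin m) (f : Evec m → Evec m → ℝ) : Evec m → Evec m → ℝ :=
  fun x u => fderiv ℝ (fun x₁ => f x₁ u) x (EuclideanSpace.single i 1)

/-- Partial derivative in the second (`u`) variable. -/
def pd2 {m : ℕ} (i : Fin m) (f : Evec m → Evec m → ℝ) : Evec m → Evec m → ℝ :=
  fun x u => fderiv ℝ (fun u₁ => f x u₁) u (EuclideanSpace.single i 1)

/-- The bosonic Laplacian `𝒟_k`. -/
def Dk (m k : ℕ) (f : Evec m → Evec m → ℝ) : Evec m → Evec m → ℝ := fun x u =>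
  (∑ i : Fin m, pd1 i (pd1 i f) x u)
    - (4 / ((m : ℝ) + 2 * k - 2)) *
        ∑ i : Fin m, ∑ j : Fin m, u i * pd1 i (pd2 j (pd1 j f)) x u
    + (4 * ‖u‖ ^ 2 / (((m : ℝ) + 2 * k - 2) * ((m : ℝ) + 2 * k - 4))) *
        ∑ i : Fin m, ∑ j : Fin m, pd2 i (pd1 i (pd2 j (pd1 j f))) x u

/-- `f ∈ C²(Ω×𝔹^m, ℋ_k)`: twice continuously differentiable on `Ω × 𝔹^m` and, for each
fixed `x ∈ Ω`, coinciding in the second variable with an element of `ℋ_k`. -/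
def C2Hk (m k : ℕ) (Ω : Set (Evec m)) (f : Evec m → Evec m → ℝ) : Prop :=
  ContDiffOn ℝ 2 (fun q : Evec m × Evec m => f q.1 q.2) (Ω ×ˢ ball (0 : Evec m) 1) ∧
  ∀ x ∈ Ω, ∃ q, IsHk m k q ∧ ∀ u ∈ closedBall (0 : Evec m) 1, f x u = q u

/-- The `L^p` norm `(∫_{ℝ^{m-1}} ∫_{𝕊^{m-1}} |f(x',u)|^p dS(u) dx')^{1/p}` (`m = d+1`),
valued in `ℝ≥0∞`. -/
def lpH (d : ℕ) (p : ℝ) (f : Evec d → Evec (d + 1) → ℝ) : ENNReal :=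
  (∫⁻ x' : Evec d, ∫⁻ u, ENNReal.ofReal (|f x' u| ^ p) ∂(sphereM (d + 1))) ^ (1 / p)

/-- `f ∈ L^p(ℝ^{m-1}×𝔹^m, ℋ_k)` (`m = d+1`). -/
def MemLpH (d k : ℕ) (p : ℝ) (f : Evec d → Evec (d + 1) → ℝ) : Prop :=
  Measurable (fun q : Evec d × Evec (d + 1) => f q.1 q.2) ∧
  (∀ x' : Evec d, ∃ q, IsHk (d + 1) k q ∧
    ∀ u ∈ closedBall (0 : Evec (d + 1)) 1, f x' u = q u) ∧
  lpH d p f < ⊤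

/-- The `L^p` norm `(∫_{𝕊^{m-1}} ∫_{𝕊^{m-1}} |h(ζ,ω)|^p dS(ω) dS(ζ))^{1/p}`,
valued in `ℝ≥0∞`. -/
def lpS (m : ℕ) (p : ℝ) (h : Evec m → Evec m → ℝ) : ENNReal :=
  (∫⁻ ζ, ∫⁻ ω, ENNReal.ofReal (|h ζ ω| ^ p) ∂(sphereM m) ∂(sphereM m)) ^ (1 / p)

/-- `h ∈ L^p(𝕊^{m-1}×𝔹^m, ℋ_k)`. -/
def MemLpS (m k : ℕ) (p : ℝ) (h : Evec m → Evec m → ℝ) : Prop :=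
  Measurable (fun q : Evec m × Evec m => h q.1 q.2) ∧
  (∀ ζ : Evec m, ‖ζ‖ = 1 → ∃ q, IsHk m k q ∧
    ∀ ω ∈ closedBall (0 : Evec m) 1, h ζ ω = q ω) ∧
  lpS m p h < ⊤

/-- Iterated partial derivative `D_x^α` in the first variable, for a multi-index `α ∈ ℕ^m`. -/
def Dx {m : ℕ} (α : Fin m → ℕ) (f : Evec m → Evec m → ℝ) : Evec m → Evec m → ℝ :=
  (List.finRange m).foldr (fun i g => (pd1 i)^[α i] g) f

/-- Iterated partial derivative `D_ν^β` in the second variable, for a multi-index `β ∈ ℕ^m`. -/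
def Dv {m : ℕ} (β : Fin m → ℕ) (f : Evec m → Evec m → ℝ) : Evec m → Evec m → ℝ :=
  (List.finRange m).foldr (fun i g => (pd2 i)^[β i] g) f

section Algebra

variable {M : Type*} [AddCommGroup M] [Module ℝ M]

/-- The commutation relations of the twistor-type operators `X`, `Y` turn a
bosonic Laplace equation of degree `k` into a polyharmonic equation of order `k + 1`. -/
theorem pow_apply_eq_zero_of_bosonic (X Y s N : Module.End ℝ M) (m : ℝ) (hm : 4 < m)
    (hYX : ∀ q, Y (X q) = X (Y q) + s q) (hYN : ∀ q, Y (N q) = N (Y q) + (2 : ℝ) • X q)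
    (hsX : ∀ q, s (X q) = X (s q)) (hsY : ∀ q, s (Y q) = Y (s q))
    (hsN : ∀ q, s (N q) = N (s q)) (k : ℕ) :
    ∀ q : M, (Y ^ (k + 1)) q = 0 →
      s q - (4 / (m + 2 * k - 2)) • X (Y q)
        + (4 / ((m + 2 * k - 2) * (m + 2 * k - 4))) • N (Y (Y q)) = 0 →
      (s ^ (k + 1)) q = 0 := by
  have pow_comm : ∀ (Z : Module.End ℝ M), (∀ q, s (Z q) = Z (s q)) →
      ∀ (n : ℕ) q, (s ^ n) (Z q) = Z ((s ^ n) q) := by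
    intro Z hZ n
    induction n with
    | zero => intro q; simp
    | succ n ih => intro q; rw [pow_succ, Module.End.mul_apply, hZ, ih, Module.End.mul_apply]
  induction k with
  | zero =>
    intro q hY hD
    have hY' : Y q = 0 := by simpa using hY
    simpa [hY'] using hD
  | succ k ih =>
    intro q hY hD
    have hk : (0 : ℝ) ≤ k := Nat.cast_nonneg k
    have h1 : m + 2 * k ≠ 0 := by linarith
    have h2 : m + 2 * k - 2 ≠ 0 := by linarith
    have h3 : m + 2 * k - 4 ≠ 0 := by linarith
    push_cast at hD
    rw [show m + 2 * ((k : ℝ) + 1) - 2 = m + 2 * k by ring,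
      show m + 2 * ((k : ℝ) + 1) - 4 = m + 2 * k - 2 by ring] at hD
    have hYq : (s ^ (k + 1)) (Y q) = 0 := by
      apply ih
      · rw [pow_succ, Module.End.mul_apply] at hY
        exact hY
      · have h := congrArg Y hD
        simp only [map_add, map_sub, map_smul, map_zero, hYX, hYN, ← hsY] at h
        have h' := congrArg (fun z => ((m + 2 * k) / (m + 2 * k - 4)) • z) h
        simp only [smul_zero] at h'
        rw [← h']
        match_scalars
        · field_simp
        · field_simp
          ring
        · field_simp
    have hsq : s q = (4 / (m + 2 * k)) • X (Y q)
        - (4 / ((m + 2 * k) * (m + 2 * k - 2))) • N (Y (Y q)) := by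
      rw [← sub_eq_zero, ← hD]
      abel
    rw [pow_succ, Module.End.mul_apply, hsq, map_sub, map_smul, map_smul, pow_comm X hsX,
      pow_comm N hsN, pow_comm Y hsY _ (Y q), hYq]
    simp

end Algebra

section Poly

open MvPolynomial

variable {V : Type*} [AddCommGroup V] [Module ℝ V] {m : ℕ}

/-- Polynomial-valued functionals on a space carrying the operators `d i`. -/
abbrev PolyFun (V : Type*) [AddCommGroup V] [Module ℝ V] (m : ℕ) : Type _ :=
  V →ₗ[ℝ] MvPolynomial (Fin m) ℝ

/-- `F ↦ (ψ ↦ b (F (a ψ)))`. -/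
def sandwich (a : Module.End ℝ V) (b : Module.End ℝ (MvPolynomial (Fin m) ℝ)) :
    Module.End ℝ (PolyFun V m) where
  toFun F := b ∘ₗ F ∘ₗ a
  map_add' F G := by ext; simp
  map_smul' c F := by ext; simp

@[simp] theorem sandwich_apply (a : Module.End ℝ V) (b : Module.End ℝ (MvPolynomial (Fin m) ℝ))
    (F : PolyFun V m) (ψ : V) : sandwich a b F ψ = b (F (a ψ)) := rfl

/-- Multiplication by `u_i`. -/
def mulX (i : Fin m) : Module.End ℝ (MvPolynomial (Fin m) ℝ) :=
  LinearMap.mulLeft ℝ (X i)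

/-- Differentiation in `u_i`. -/
def derX (i : Fin m) : Module.End ℝ (MvPolynomial (Fin m) ℝ) :=
  (pderiv i : Derivation ℝ (MvPolynomial (Fin m) ℝ) (MvPolynomial (Fin m) ℝ)).toLinearMap

theorem mulX_apply (i : Fin m) (p : MvPolynomial (Fin m) ℝ) : mulX i p = X i * p := rfl

theorem derX_apply (i : Fin m) (p : MvPolynomial (Fin m) ℝ) : derX i p = pderiv i p := rfl

/-- The operator `⟨u, ∂_x⟩`. -/
def opX (d : Fin m → Module.End ℝ V) : Module.End ℝ (PolyFun V m) :=
  ∑ i, sandwich (d i) (mulX i)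

/-- The operator `⟨∂_u, ∂_x⟩`. -/
def opY (d : Fin m → Module.End ℝ V) : Module.End ℝ (PolyFun V m) :=
  ∑ i, sandwich (d i) (derX i)

/-- The operator `Δ_x`. -/
def opS (d : Fin m → Module.End ℝ V) : Module.End ℝ (PolyFun V m) :=
  ∑ i, sandwich (d i * d i) 1

/-- Multiplication by `|u|²`. -/
def opN : Module.End ℝ (PolyFun V m) := ∑ i, sandwich 1 (mulX i * mulX i)

theorem opX_apply (d : Fin m → Module.End ℝ V) (F : PolyFun V m) (ψ : V) :
    opX d F ψ = ∑ i, X i * F (d i ψ) := by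
  simp [opX, LinearMap.sum_apply, mulX_apply]

theorem opY_apply (d : Fin m → Module.End ℝ V) (F : PolyFun V m) (ψ : V) :
    opY d F ψ = ∑ i, pderiv i (F (d i ψ)) := by
  simp [opY, LinearMap.sum_apply, derX_apply]

theorem opS_apply (d : Fin m → Module.End ℝ V) (F : PolyFun V m) (ψ : V) :
    opS d F ψ = ∑ i, F (d i (d i ψ)) := by
  simp [opS, LinearMap.sum_apply]

theorem opN_apply (F : PolyFun V m) (ψ : V) :
    opN F ψ = (∑ i, X i * X i) * F ψ := by
  simp [opN, LinearMap.sum_apply, mulX_apply, Finset.sum_mul, mul_assoc]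

theorem opS_pow_apply (d : Fin m → Module.End ℝ V) (n : ℕ) :
    ∀ (F : PolyFun V m) (ψ : V),
      (opS d ^ n) F ψ = F (((∑ i, d i * d i) ^ n) ψ) := by
  induction n with
  | zero => intro F ψ; simp
  | succ n ih =>
    intro F ψ
    rw [pow_succ, Module.End.mul_apply, ih, opS_apply, pow_succ', Module.End.mul_apply,
      LinearMap.sum_apply, map_sum]
    rfl

theorem opY_pow_eq_zero (d : Fin m → Module.End ℝ V) (k : ℕ) :
    ∀ F : PolyFun V m, (∀ ψ, (F ψ).IsHomogeneous k) → (opY d ^ (k + 1)) F = 0 := by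
  induction k with
  | zero =>
    intro F hF
    ext1 ψ
    rw [zero_add, pow_one, opY_apply]
    refine Finset.sum_eq_zero fun i _ => ?_
    have := (totalDegree_zero_iff_isHomogeneous _).2 (hF (d i ψ))
    rw [totalDegree_eq_zero_iff_eq_C] at this
    rw [this, pderiv_C]
  | succ k ih =>
    intro F hF
    rw [pow_succ, Module.End.mul_apply]
    apply ih
    intro ψ
    rw [opY_apply]
    exact IsHomogeneous.sum _ _ _ fun i _ => (hF _).pderiv

/-- A polynomial-valued functional solving the bosonic Laplace equation is annihilated by
`(Δ_x)^{k+1}`. -/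
theorem polyharmonic_of_bosonic (d : Fin m → Module.End ℝ V)
    (hd : ∀ i j ψ, d i (d j ψ) = d j (d i ψ)) (hm : 4 < m) (k : ℕ) (F : PolyFun V m)
    (hF : ∀ ψ, (F ψ).IsHomogeneous k)
    (hD : ∀ ψ, opS d F ψ - (4 / ((m : ℝ) + 2 * k - 2)) • opX d (opY d F) ψ
        + (4 / (((m : ℝ) + 2 * k - 2) * ((m : ℝ) + 2 * k - 4))) •
          opN (opY d (opY d F)) ψ = 0) (ψ : V) :
    F (((∑ i, d i * d i) ^ (k + 1)) ψ) = 0 := by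
  rw [← opS_pow_apply, pow_apply_eq_zero_of_bosonic (opX d) (opY d) (opS d) opN m
    (by exact_mod_cast hm) ?_ ?_ ?_ ?_ ?_ k F (opY_pow_eq_zero d k F hF)
    (LinearMap.ext fun ψ => by simpa using hD ψ), LinearMap.zero_apply]
  · intro q
    ext1 ψ
    rw [LinearMap.add_apply, opY_apply, opX_apply, opS_apply]
    simp only [opX_apply, opY_apply, map_sum, Derivation.leibniz, pderiv_X, smul_eq_mul,
      Finset.mul_sum, Finset.sum_add_distrib]
    rw [Finset.sum_comm]
    congr 1
    · exact Finset.sum_congr rfl fun i _ => Finset.sum_congr rfl fun j _ => by rw [hd]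
    · refine Finset.sum_congr rfl fun i _ => ?_
      simp [Pi.single_apply]
  · intro q
    ext1 ψ
    rw [LinearMap.add_apply, LinearMap.smul_apply, opY_apply, opX_apply, opN_apply, opY_apply]
    simp only [opN_apply, Derivation.leibniz, map_sum, pderiv_X, smul_eq_mul,
      Finset.sum_add_distrib, Finset.mul_sum]
    congr 1
    rw [Finset.smul_sum]
    refine Finset.sum_congr rfl fun i _ => ?_
    simp [Pi.single_apply, two_smul]
    ring
  · intro q
    ext1 ψ
    simp only [opX_apply, opS_apply, Finset.mul_sum]
    rw [Finset.sum_comm]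
    exact Finset.sum_congr rfl fun i _ => Finset.sum_congr rfl fun j _ => by rw [hd i j, hd i j]
  · intro q
    ext1 ψ
    simp only [opY_apply, opS_apply, map_sum]
    rw [Finset.sum_comm]
    exact Finset.sum_congr rfl fun i _ => Finset.sum_congr rfl fun j _ => by rw [hd i j, hd i j]
  · intro q
    ext1 ψ
    simp only [opN_apply, opS_apply, Finset.mul_sum]

end Poly

section Radial

open scoped ContDiff

variable {m : ℕ}

/-- The Euler-type operator `t d/dt + c`. -/
def eulerOp (c : ℝ) (h : ℝ → ℝ) : ℝ → ℝ := fun t => t * deriv h t + c * h t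

/-- The composition of `eulerOp (c + j)` over `j < n`. -/
def eulerProd (c : ℝ) : ℕ → (ℝ → ℝ) → ℝ → ℝ
  | 0, g => g
  | n + 1, g => eulerOp c (eulerProd (c + 1) n g)

/-- The radial function with profile `h` in the variable `|y|²`. -/
def rad (m : ℕ) (h : ℝ → ℝ) : Evec m → ℝ := fun y => h (‖y‖ ^ 2)

theorem contDiff_deriv_infty {h : ℝ → ℝ} (hh : ContDiff ℝ ∞ h) : ContDiff ℝ ∞ (deriv h) :=
  (contDiff_infty_iff_deriv.1 hh).2

theorem contDiff_eulerOp (c : ℝ) {h : ℝ → ℝ} (hh : ContDiff ℝ ∞ h) :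
    ContDiff ℝ ∞ (eulerOp c h) :=
  (contDiff_id.mul (contDiff_deriv_infty hh)).add (contDiff_const.mul hh)

theorem contDiff_eulerProd (n : ℕ) {h : ℝ → ℝ} (hh : ContDiff ℝ ∞ h) :
    ∀ c : ℝ, ContDiff ℝ ∞ (eulerProd c n h) := by
  induction n with
  | zero => exact fun _ => hh
  | succ n ih => exact fun c => contDiff_eulerOp c (ih _)

theorem deriv_eulerOp (c : ℝ) {h : ℝ → ℝ} (hh : ContDiff ℝ ∞ h) :
    deriv (eulerOp c h) = eulerOp (c + 1) (deriv h) := by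
  funext t
  have h1 : HasDerivAt h (deriv h t) t := (hh.differentiable (by simp) t).hasDerivAt
  have h2 : HasDerivAt (deriv h) (deriv (deriv h) t) t :=
    ((contDiff_deriv_infty hh).differentiable (by simp) t).hasDerivAt
  have := ((hasDerivAt_id t).mul h2).add (h1.const_mul c)
  rw [show eulerOp c h = (id * deriv h + fun y => c * h y) from rfl, this.deriv, eulerOp]
  simp only [id_eq]
  ring

theorem deriv_eulerProd (n : ℕ) {h : ℝ → ℝ} (hh : ContDiff ℝ ∞ h) :
    ∀ c : ℝ, deriv (eulerProd c n h) = eulerProd (c + 1) n (deriv h) := by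
  induction n with
  | zero => exact fun _ => rfl
  | succ n ih =>
    intro c
    rw [eulerProd, deriv_eulerOp c (contDiff_eulerProd n hh _), ih, eulerProd]

theorem eulerOp_eq_zero {h : ℝ → ℝ} (hh : ContDiff ℝ ∞ h) (h0 : ∀ t, 1 ≤ t → h t = 0) (c : ℝ) :
    ∀ t, 1 ≤ t → eulerOp c h t = 0 := by
  have hd : ∀ t, 1 ≤ t → deriv h t = 0 := by
    intro t ht
    have h1 := (hh.differentiable (by simp) t).hasDerivAt.hasDerivWithinAt (s := Set.Ici t)
    have h2 : HasDerivWithinAt h 0 (Set.Ici t) t :=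
      (hasDerivWithinAt_const t (Set.Ici t) (0 : ℝ)).congr
        (fun s hs => h0 s (ht.trans hs)) (h0 t ht)
    exact (uniqueDiffOn_Ici t t Set.self_mem_Ici).eq_deriv _ h1 h2
  intro t ht
  simp [eulerOp, hd t ht, h0 t ht]

theorem eulerProd_eq_zero {h : ℝ → ℝ} (hh : ContDiff ℝ ∞ h) (h0 : ∀ t, 1 ≤ t → h t = 0)
    (n : ℕ) : ∀ c : ℝ, ∀ t, 1 ≤ t → eulerProd c n h t = 0 := by
  induction n with
  | zero => exact fun _ => h0
  | succ n ih => exact fun c => eulerOp_eq_zero (contDiff_eulerProd n hh _) (ih _) c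

/-- Iterated antiderivatives vanishing on `[1, ∞)`. -/
theorem exists_iterate_deriv_eq {g : ℝ → ℝ} (hg : ContDiff ℝ ∞ g) (h0 : ∀ t, 1 ≤ t → g t = 0)
    (n : ℕ) : ∃ h : ℝ → ℝ, ContDiff ℝ ∞ h ∧ (∀ t, 1 ≤ t → h t = 0) ∧ deriv^[n] h = g := by
  induction n with
  | zero => exact ⟨g, hg, h0, rfl⟩
  | succ n ih =>
    obtain ⟨h, hh, hz, hd⟩ := ih
    have hder : ∀ t, HasDerivAt (fun t => ∫ s in (1 : ℝ)..t, h s) (h t) t := fun t =>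
      intervalIntegral.integral_hasDerivAt_right (hh.continuous.intervalIntegrable _ _)
        (hh.continuous.stronglyMeasurableAtFilter _ _) hh.continuous.continuousAt
    have hde : deriv (fun t => ∫ s in (1 : ℝ)..t, h s) = h := funext fun t => (hder t).deriv
    refine ⟨fun t => ∫ s in (1 : ℝ)..t, h s, ?_, ?_, ?_⟩
    · rw [contDiff_infty_iff_deriv, hde]
      exact ⟨fun t => (hder t).differentiableAt, hh⟩
    · intro t ht
      change ∫ s in (1 : ℝ)..t, h s = 0
      rw [intervalIntegral.integral_congr (g := fun _ => 0), intervalIntegral.integral_zero]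
      intro s hs
      rw [Set.uIcc_of_le ht] at hs
      exact hz s hs.1
    · rw [Function.iterate_succ_apply, hde, hd]

theorem contDiff_rad {h : ℝ → ℝ} (hh : ContDiff ℝ ∞ h) : ContDiff ℝ ∞ (rad m h) :=
  hh.comp (contDiff_norm_sq ℝ)

theorem tsupport_rad_subset {h : ℝ → ℝ} (h0 : ∀ t, 1 ≤ t → h t = 0) :
    tsupport (rad m h) ⊆ closedBall 0 1 := by
  refine closure_minimal (fun y hy => ?_) isClosed_closedBall
  rw [mem_closedBall_zero_iff]
  by_contra hlt
  exact hy (h0 _ (one_le_pow₀ (not_le.1 hlt).le))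

theorem fderiv_rad {h : ℝ → ℝ} (hh : ContDiff ℝ ∞ h) (y v : Evec m) :
    fderiv ℝ (rad m h) y v = 2 * ⟪y, v⟫ * rad m (deriv h) y := by
  have h1 : HasDerivAt h (deriv h (‖y‖ ^ 2)) (‖y‖ ^ 2) :=
    (hh.differentiable (by simp) _).hasDerivAt
  have h2 := h1.comp_hasFDerivAt y (hasStrictFDerivAt_norm_sq y).hasFDerivAt
  rw [show rad m h = h ∘ fun y => ‖y‖ ^ 2 from rfl, h2.fderiv]
  simp [rad]
  ring

theorem pdv_rad {h : ℝ → ℝ} (hh : ContDiff ℝ ∞ h) (i : Fin m) :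
    pdv i (rad m h) = fun y => 2 * y i * rad m (deriv h) y := by
  funext y
  rw [pdv, fderiv_rad hh]
  simp [EuclideanSpace.inner_single_right]

theorem euler_rad {h : ℝ → ℝ} (hh : ContDiff ℝ ∞ h) (y : Evec m) :
    m * rad m h y + fderiv ℝ (rad m h) y y = 2 * rad m (eulerOp (m / 2) h) y := by
  rw [fderiv_rad hh, real_inner_self_eq_norm_sq]
  simp only [rad, eulerOp]
  ring

theorem lapl_rad {h : ℝ → ℝ} (hh : ContDiff ℝ ∞ h) :
    lapl (rad m h) = fun y => 4 * rad m (eulerOp (m / 2) (deriv h)) y := by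
  have hd := contDiff_deriv_infty hh
  funext y
  have key : ∀ i : Fin m, pdv i (pdv i (rad m h)) y
      = 2 * rad m (deriv h) y + 4 * (y i) ^ 2 * rad m (deriv (deriv h)) y := by
    intro i
    rw [pdv_rad hh]
    have h1 : HasFDerivAt (fun y : Evec m => 2 * y i)
        ((2 : ℝ) • (EuclideanSpace.proj i : Evec m →L[ℝ] ℝ)) y :=
      ((EuclideanSpace.proj i : Evec m →L[ℝ] ℝ).hasFDerivAt).const_mul 2
    have h2 := ((contDiff_rad (m := m) hd).differentiable (by simp) y).hasFDerivAt
    rw [pdv, show (fun y : Evec m => 2 * y i * rad m (deriv h) y)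
      = (fun y : Evec m => 2 * y i) * rad m (deriv h) from rfl, (h1.mul h2).fderiv]
    have h3 : fderiv ℝ (rad m (deriv h)) y (EuclideanSpace.single i 1)
        = 2 * y i * rad m (deriv (deriv h)) y := congrFun (pdv_rad hd i) y
    simp [h3]
    ring
  simp only [lapl, key, Finset.sum_add_distrib, ← Finset.sum_mul, ← Finset.mul_sum]
  have hn : ∑ i : Fin m, (y i) ^ 2 = ‖y‖ ^ 2 := by simp [EuclideanSpace.norm_sq_eq]
  rw [hn]
  simp [rad, eulerOp]
  ring

theorem pdv_const_mul (i : Fin m) (c : ℝ) {g : Evec m → ℝ} (hg : ContDiff ℝ ∞ g) :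
    pdv i (fun y => c * g y) = fun y => c * pdv i g y := by
  funext y
  rw [pdv, fderiv_const_mul (hg.differentiable (by simp) y)]
  rfl

theorem contDiff_pdv (i : Fin m) {g : Evec m → ℝ} (hg : ContDiff ℝ ∞ g) :
    ContDiff ℝ ∞ (pdv i g) :=
  (hg.fderiv_right (by simp)).clm_apply contDiff_const

theorem lapl_const_mul (c : ℝ) {g : Evec m → ℝ} (hg : ContDiff ℝ ∞ g) :
    lapl (fun y => c * g y) = fun y => c * lapl g y := by
  funext y
  simp only [lapl, pdv_const_mul _ c hg, pdv_const_mul _ c (contDiff_pdv _ hg), Finset.mul_sum]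

theorem lapl_iterate_rad (n : ℕ) {h : ℝ → ℝ} (hh : ContDiff ℝ ∞ h) :
    lapl^[n] (rad m h) = fun y => 4 ^ n * rad m (eulerProd (m / 2) n (deriv^[n] h)) y := by
  have hit : ∀ n, ContDiff ℝ ∞ (deriv^[n] h) := by
    intro n
    induction n with
    | zero => exact hh
    | succ n ih =>
      rw [Function.iterate_succ_apply']
      exact contDiff_deriv_infty ih
  induction n with
  | zero => simp [eulerProd]
  | succ n ih =>
    have hc := contDiff_eulerProd n (hit n) (m / 2)
    rw [Function.iterate_succ_apply', ih, lapl_const_mul _ (contDiff_rad hc), lapl_rad hc,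
      deriv_eulerProd n (hit n), Function.iterate_succ_apply' deriv, eulerProd]
    funext y
    ring

theorem fderiv_self_eq_sum (g : Evec m → ℝ) (y : Evec m) :
    fderiv ℝ g y y = ∑ i, y i * pdv i g y := by
  have h := congrArg (fderiv ℝ g y) ((EuclideanSpace.basisFun (Fin m) ℝ).sum_repr y)
  rw [← h]
  simp [pdv]

theorem integral_fderiv_self {g : Evec m → ℝ} (hg : ContDiff ℝ ∞ g) (hc : HasCompactSupport g) :
    Integrable (fun y => fderiv ℝ g y y) ∧ ∫ y, fderiv ℝ g y y = -(m * ∫ y, g y) := by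
  have hcont : ∀ i : Fin m, Continuous fun y : Evec m => y i := fun i =>
    (EuclideanSpace.proj i : Evec m →L[ℝ] ℝ).continuous
  have hp : ∀ i : Fin m, HasCompactSupport (pdv i g) := fun i =>
    hc.mono' ((subset_tsupport _).trans (tsupport_fderiv_apply_subset ℝ _))
  have hintegral : ∀ i : Fin m, Integrable (fun y : Evec m => y i * pdv i g y) := fun i =>
    ((hcont i).mul (contDiff_pdv i hg).continuous).integrable_of_hasCompactSupport
      (hp i).mul_left
  have hval : ∀ i : Fin m, ∫ y : Evec m, y i * pdv i g y = -∫ y, g y := by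
    intro i
    have hfd : ∀ y : Evec m, fderiv ℝ (fun y : Evec m => y i) y (EuclideanSpace.single i 1) = 1 := by
      intro y
      rw [show (fun y : Evec m => y i) = (EuclideanSpace.proj i : Evec m →L[ℝ] ℝ) from rfl,
        ContinuousLinearMap.fderiv]
      simp
    have := integral_mul_fderiv_eq_neg_fderiv_mul_of_integrable (μ := (volume : Measure (Evec m)))
      (f := fun y : Evec m => y i) (g := g) (v := EuclideanSpace.single i 1) ?_ (hintegral i) ?_
      (fun y _ => (EuclideanSpace.proj i : Evec m →L[ℝ] ℝ).differentiableAt)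
      (fun y _ => hg.differentiable (by simp) y)
    · simpa [hfd, pdv] using this
    · simpa [hfd] using hg.continuous.integrable_of_hasCompactSupport hc
    · exact ((hcont i).mul hg.continuous).integrable_of_hasCompactSupport hc.mul_left
  simp only [fderiv_self_eq_sum]
  refine ⟨integrable_finsetSum _ fun i _ => hintegral i, ?_⟩
  rw [integral_finsetSum _ fun i _ => hintegral i]
  simp [hval]

theorem hasCompactSupport_of_tsupport_subset {g : Evec m → ℝ} {r : ℝ}
    (h : tsupport g ⊆ closedBall 0 r) : HasCompactSupport g :=
  (isCompact_closedBall (0 : Evec m) r).of_isClosed_subset (isClosed_tsupport g) h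

theorem integral_rad_eulerOp (j : ℝ) {h : ℝ → ℝ} (hh : ContDiff ℝ ∞ h)
    (h0 : ∀ t, 1 ≤ t → h t = 0) :
    ∫ y, rad m (eulerOp (m / 2 + j) h) y = j * ∫ y, rad m h y := by
  have hc := hasCompactSupport_of_tsupport_subset (tsupport_rad_subset (m := m) h0)
  have hi := (contDiff_rad (m := m) hh).continuous.integrable_of_hasCompactSupport hc (μ := volume)
  obtain ⟨h1, h2⟩ := integral_fderiv_self (contDiff_rad hh) hc
  have : ∀ y, rad m (eulerOp (m / 2 + j) h) y
      = (1 / 2) * fderiv ℝ (rad m h) y y + (m / 2 + j) * rad m h y := by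
    intro y
    have := euler_rad hh y
    simp only [rad, eulerOp] at this ⊢
    linarith
  simp only [this]
  rw [integral_add (h1.const_mul _) (hi.const_mul _), integral_const_mul, integral_const_mul, h2]
  ring

theorem integral_rad_eulerProd (n : ℕ) {h : ℝ → ℝ} (hh : ContDiff ℝ ∞ h)
    (h0 : ∀ t, 1 ≤ t → h t = 0) (hpos : 0 < ∫ y, rad m h y) :
    ∀ j : ℝ, 0 < j → 0 < ∫ y, rad m (eulerProd (m / 2 + j) n h) y := by
  induction n with
  | zero => exact fun _ _ => hpos
  | succ n ih =>
    intro j hj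
    rw [eulerProd, integral_rad_eulerOp j (contDiff_eulerProd n hh _)
      (eulerProd_eq_zero hh h0 n _), add_assoc]
    exact mul_pos hj (ih _ (by linarith))

/-- A mollifier reproducing polyharmonic functions: its dilation derivative is an iterated
Laplacian of a test function. -/
theorem exists_polyharmonic_kernel (m n : ℕ) :
    ∃ (φ ψ : Evec m → ℝ) (κ : ℝ), ContDiff ℝ ∞ φ ∧ ContDiff ℝ ∞ ψ ∧ tsupport φ ⊆ closedBall 0 1 ∧
      tsupport ψ ⊆ closedBall 0 1 ∧ ∫ y, φ y = 1 ∧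
      ∀ y, m * φ y + fderiv ℝ φ y y = κ * lapl^[n + 1] ψ y := by
  obtain ⟨χ, hχ, hχ0, hχp, hχn⟩ : ∃ χ : ℝ → ℝ, ContDiff ℝ ∞ χ ∧ (∀ t, 1 ≤ t → χ t = 0) ∧
      0 < χ 0 ∧ ∀ t, 0 ≤ χ t :=
    ⟨fun t => Real.smoothTransition (1 - t),
      Real.smoothTransition.contDiff.comp (contDiff_const.sub contDiff_id),
      fun t ht => Real.smoothTransition.zero_of_nonpos (by linarith),
      Real.smoothTransition.pos_of_pos (by norm_num), fun t => Real.smoothTransition.nonneg _⟩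
  obtain ⟨h, hh, hh0, hhd⟩ := exists_iterate_deriv_eq hχ hχ0 (n + 1)
  have hcχ := hasCompactSupport_of_tsupport_subset (tsupport_rad_subset (m := m) hχ0)
  have hposχ : 0 < ∫ y, rad m χ y :=
    (contDiff_rad hχ).continuous.integral_pos_of_hasCompactSupport_nonneg_nonzero hcχ
      (fun y => hχn _) (x := 0) (by simpa [rad] using hχp.ne')
  have hpos := integral_rad_eulerProd n hχ hχ0 hposχ 1 one_pos
  set p := eulerProd ((m : ℝ) / 2 + 1) n χ with hp
  set I := ∫ y, rad m p y with hI
  have hpc : ContDiff ℝ ∞ p := contDiff_eulerProd n hχ _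
  have hp0 := eulerProd_eq_zero hχ hχ0 n ((m : ℝ) / 2 + 1)
  refine ⟨rad m (fun t => I⁻¹ * p t), rad m h, I⁻¹ * 2 / 4 ^ (n + 1),
    contDiff_rad (contDiff_const.mul hpc), contDiff_rad hh,
    tsupport_rad_subset fun t ht => by simp [hp, hp0 t ht],
    tsupport_rad_subset hh0, ?_, ?_⟩
  · change ∫ y, I⁻¹ * rad m p y = 1
    rw [integral_const_mul, ← hI, inv_mul_cancel₀ hpos.ne']
  · intro y
    rw [lapl_iterate_rad (n + 1) hh, hhd, euler_rad (contDiff_const.mul hpc), eulerProd, ← hp]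
    simp only [rad, eulerOp, deriv_const_mul_field]
    field_simp

end Radial

section MeanValue

open scoped ContDiff

variable {m : ℕ}

theorem pdv_comp_smul (i : Fin m) (g : Evec m → ℝ) (t : ℝ) :
    pdv i (fun y => g (t • y)) = fun y => t * pdv i g (t • y) := by
  funext y
  rw [pdv, fderiv_comp_smul]
  simp [pdv]

theorem contDiff_lapl {g : Evec m → ℝ} (hg : ContDiff ℝ ∞ g) : ContDiff ℝ ∞ (lapl g) :=
  ContDiff.sum fun i _ => contDiff_pdv i (contDiff_pdv i hg)

theorem contDiff_lapl_iterate {g : Evec m → ℝ} (hg : ContDiff ℝ ∞ g) (n : ℕ) :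
    ContDiff ℝ ∞ (lapl^[n] g) := by
  induction n with
  | zero => exact hg
  | succ n ih =>
    rw [Function.iterate_succ_apply']
    exact contDiff_lapl ih

theorem contDiff_comp_smul {g : Evec m → ℝ} (hg : ContDiff ℝ ∞ g) (t : ℝ) :
    ContDiff ℝ ∞ (fun y => g (t • y)) := hg.comp (contDiff_const_smul t)

theorem lapl_iterate_comp_smul {g : Evec m → ℝ} (hg : ContDiff ℝ ∞ g) (t : ℝ) (n : ℕ) :
    lapl^[n] (fun y => g (t • y)) = fun y => t ^ (2 * n) * lapl^[n] g (t • y) := by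
  induction n with
  | zero => simp
  | succ n ih =>
    have hs := contDiff_lapl_iterate hg n
    rw [Function.iterate_succ_apply', ih, lapl_const_mul _ (contDiff_comp_smul hs t),
      Function.iterate_succ_apply']
    funext y
    simp only [lapl, pdv_comp_smul, pdv_const_mul _ t (contDiff_comp_smul (contDiff_pdv _ hs) t),
      Finset.mul_sum]
    exact Finset.sum_congr rfl fun i _ => by ring

theorem tsupport_comp_inv_smul_subset {g : Evec m → ℝ} (hg : tsupport g ⊆ closedBall 0 1) {t : ℝ}
    (ht : 0 < t) : tsupport (fun y => g (t⁻¹ • y)) ⊆ closedBall 0 t := by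
  refine closure_minimal (fun y hy => ?_) isClosed_closedBall
  have := hg (subset_tsupport g hy)
  rw [mem_closedBall_zero_iff, norm_smul, norm_inv, Real.norm_of_nonneg ht.le,
    inv_mul_le_iff₀ ht, mul_one] at this
  simpa using this

theorem hasCompactSupport_lapl_iterate {g : Evec m → ℝ} (hg : HasCompactSupport g) (n : ℕ) :
    HasCompactSupport (lapl^[n] g) := by
  induction n with
  | zero => exact hg
  | succ n ih =>
    rw [Function.iterate_succ_apply']
    refine ih.mono' fun y hy => ?_
    by_contra hy'
    refine hy (Finset.sum_eq_zero fun i _ => ?_)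
    refine image_eq_zero_of_notMem_tsupport fun h => hy' ?_
    exact tsupport_fderiv_apply_subset ℝ _ (tsupport_fderiv_apply_subset ℝ _ h)

/-- The rescaled mollifier `y ↦ t^{-m} φ(y/t)`. -/
def mollifier (φ : Evec m → ℝ) (t : ℝ) : Evec m → ℝ := fun y => (t ^ m)⁻¹ * φ (t⁻¹ • y)

/-- A weakly polyharmonic function is reproduced by the polyharmonic mollifier. -/
theorem eq_integral_mollifier {n : ℕ} {φ ψ : Evec m → ℝ} {κ : ℝ} (hφ : ContDiff ℝ ∞ φ)
    (hψ : ContDiff ℝ ∞ ψ) (hφs : tsupport φ ⊆ closedBall 0 1) (hψs : tsupport ψ ⊆ closedBall 0 1)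
    (hφ1 : ∫ y, φ y = 1) (hφψ : ∀ y, m * φ y + fderiv ℝ φ y y = κ * lapl^[n] ψ y)
    {c : Evec m → ℝ} (hc : Continuous c) (hcs : HasCompactSupport c) (b : Evec m) {R : ℝ}
    (hR : 0 < R)
    (hw : ∀ η : Evec m → ℝ, ContDiff ℝ ∞ η → tsupport η ⊆ closedBall 0 R →
      ∫ y, c (b - y) * lapl^[n] η y = 0) :
    c b = ∫ y, c (b - y) * mollifier φ R y := by
  set K : ℝ → ℝ := fun t => ∫ z, c (b - t • z) * φ z with hK
  have hφc := hasCompactSupport_of_tsupport_subset hφs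
  obtain ⟨Mc, hMc⟩ := hcs.exists_bound_of_continuous hc
  have hφi : Integrable φ := hφ.continuous.integrable_of_hasCompactSupport hφc
  have hcb : Integrable (fun y => c (b - y)) :=
    (hc.integrable_of_hasCompactSupport hcs).comp_sub_left b
  have hKc : Continuous K := by
    refine continuous_of_dominated (bound := fun z => Mc * ‖φ z‖) (fun t => ?_) (fun t => ?_)
      (hφi.norm.const_mul Mc) ?_
    · exact ((hc.comp (by fun_prop)).mul hφ.continuous).aestronglyMeasurable
    · refine Eventually.of_forall fun z => ?_
      rw [norm_mul]
      gcongr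
      exact hMc _
    · refine Eventually.of_forall fun z => ?_
      exact (hc.comp (by fun_prop)).mul continuous_const
  have hKJ : ∀ t : ℝ, 0 < t → K t = ∫ y, c (b - y) * mollifier φ t y := by
    intro t ht
    have h := Measure.integral_comp_smul (volume : Measure (Evec m))
      (fun y => c (b - y) * φ (t⁻¹ • y)) t
    simp only [smul_smul, inv_mul_cancel₀ ht.ne', one_smul, finrank_euclideanSpace,
      Fintype.card_fin, smul_eq_mul] at h
    simp only [hK]
    rw [h, abs_of_pos (by positivity), ← integral_const_mul]
    refine integral_congr_ae (Eventually.of_forall fun y => ?_)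
    simp only [mollifier]
    ring
  have hder : ∀ t ∈ Set.Ioo 0 R, HasDerivAt K 0 t := by
    rintro t ⟨ht, htR⟩
    set H : Evec m → ℝ := lapl^[n] ψ with hH
    have hHc : Continuous H := (contDiff_lapl_iterate hψ n).continuous
    obtain ⟨C, hC⟩ := (hasCompactSupport_lapl_iterate
      (hasCompactSupport_of_tsupport_subset hψs) n).exists_bound_of_continuous hHc
    have hC0 : 0 ≤ C := (norm_nonneg _).trans (hC 0)
    have hmoll : ∀ y, ∀ s : ℝ, 0 < s →
        HasDerivAt (fun s => mollifier φ s y) (-(s ^ (m + 1))⁻¹ * (κ * H (s⁻¹ • y))) s := by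
      intro y s hs
      have h1 : HasDerivAt (fun s : ℝ => (s ^ m)⁻¹) (-(m * s ^ (m - 1)) / (s ^ m) ^ 2) s :=
        (hasDerivAt_pow m s).inv (pow_pos hs m).ne'
      have h2 : HasDerivAt (fun s : ℝ => s⁻¹ • y) (-(s ^ 2)⁻¹ • y) s :=
        (hasDerivAt_inv hs.ne').smul_const y
      have h3 := ((hφ.differentiable (by simp) (s⁻¹ • y)).hasFDerivAt).comp_hasDerivAt s h2
      refine HasDerivAt.congr_deriv (f := fun s => mollifier φ s y) (h1.mul h3) ?_
      rw [← hφψ, show (-(s ^ 2)⁻¹ • y) = (-s⁻¹) • (s⁻¹ • y) by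
        rw [smul_smul]; congr 1; field_simp, map_smul, smul_eq_mul]
      generalize fderiv ℝ φ (s⁻¹ • y) (s⁻¹ • y) = B
      generalize φ (s⁻¹ • y) = A
      rcases m with _ | m
      · simp
      · simp only [Nat.add_sub_cancel]
        field_simp
        ring
    have hD := hasDerivAt_integral_of_dominated_loc_of_deriv_le
      (μ := (volume : Measure (Evec m))) (s := Set.Ioo (t / 2) R) (x₀ := t)
      (F := fun s y => c (b - y) * mollifier φ s y)
      (F' := fun s y => c (b - y) * (-(s ^ (m + 1))⁻¹ * (κ * H (s⁻¹ • y))))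
      (bound := fun y => ‖c (b - y)‖ * (((t / 2) ^ (m + 1))⁻¹ * (|κ| * C)))
      (Ioo_mem_nhds (by linarith) htR) ?_ ?_ ?_ ?_ (hcb.norm.mul_const _) ?_
    · have hz : ∫ y, c (b - y) * (-(t ^ (m + 1))⁻¹ * (κ * H (t⁻¹ • y))) = 0 := by
        have h0 := hw (fun y => ψ (t⁻¹ • y)) (contDiff_comp_smul hψ _)
          ((tsupport_comp_inv_smul_subset hψs ht).trans (closedBall_subset_closedBall htR.le))
        rw [lapl_iterate_comp_smul hψ] at h0
        have : ∀ y, c (b - y) * (-(t ^ (m + 1))⁻¹ * (κ * H (t⁻¹ • y)))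
            = (-(t ^ (m + 1))⁻¹ * κ * t ^ (2 * n)) *
              (c (b - y) * (t⁻¹ ^ (2 * n) * H (t⁻¹ • y))) := by
          intro y
          have h1 : t ^ (2 * n) * t⁻¹ ^ (2 * n) = 1 := by
            rw [← mul_pow, mul_inv_cancel₀ ht.ne', one_pow]
          linear_combination (c (b - y) * (t ^ (m + 1))⁻¹ * (κ * H (t⁻¹ • y))) * h1
        simp only [this]
        rw [integral_const_mul, h0, mul_zero]
      have hD2 := hD.2
      rw [hz] at hD2
      refine hD2.congr_of_eventuallyEq ?_
      filter_upwards [lt_mem_nhds ht] with s hs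
      exact hKJ s hs
    · refine Eventually.of_forall fun s => ?_
      exact ((hc.comp (by fun_prop)).mul (continuous_const.mul
        (hφ.continuous.comp (by fun_prop)))).aestronglyMeasurable
    · exact ((hc.comp (by fun_prop)).mul (continuous_const.mul
        (hφ.continuous.comp (by fun_prop)))).integrable_of_hasCompactSupport
        (hasCompactSupport_of_tsupport_subset
          (tsupport_comp_inv_smul_subset hφs ht)).mul_left.mul_left
    · exact ((hc.comp (by fun_prop)).mul (continuous_const.mul (continuous_const.mul
        (hHc.comp (by fun_prop))))).aestronglyMeasurable
    · refine Eventually.of_forall fun y s hs => ?_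
      have hs0 : 0 < t / 2 := by linarith
      rw [norm_mul, norm_mul, norm_mul, norm_neg, norm_inv, norm_pow,
        Real.norm_of_nonneg (hs0.trans hs.1).le, Real.norm_eq_abs κ]
      have := hs.1.le
      gcongr
      exact hC _
    · exact Eventually.of_forall fun y s hs =>
        (hmoll y s ((by linarith : (0 : ℝ) < t / 2).trans hs.1)).const_mul _
  obtain ⟨t, -, ht⟩ := exists_hasDerivAt_eq_slope K (fun _ => 0) hR hKc.continuousOn hder
  rw [eq_comm, div_eq_zero_iff] at ht
  have hK0 : K 0 = c b := by simp [hK, integral_const_mul, hφ1]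
  rw [← hKJ R hR, ← hK0]
  rcases ht with h | h <;> linarith

end MeanValue

section Weak

open scoped ContDiff
open MvPolynomial (X monomial pderiv)

variable {m : ℕ}

/-- Smooth functions supported in the closed ball of radius `r`. -/
def testSpace (m : ℕ) (r : ℝ) : Submodule ℝ (Evec m → ℝ) where
  carrier := {ψ | ContDiff ℝ ∞ ψ ∧ tsupport ψ ⊆ closedBall 0 r}
  add_mem' := fun hf hg =>
    ⟨hf.1.add hg.1, (tsupport_add _ _).trans (Set.union_subset hf.2 hg.2)⟩
  zero_mem' := ⟨contDiff_const, by simp [tsupport]⟩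
  smul_mem' := fun c f hf =>
    ⟨contDiff_const.smul hf.1, (tsupport_smul_subset_right (fun _ => c) f).trans hf.2⟩

/-- Partial derivatives of test functions. -/
def testDeriv (r : ℝ) (i : Fin m) : Module.End ℝ (testSpace m r) where
  toFun ψ := ⟨pdv i ψ.1, contDiff_pdv i ψ.2.1,
    (tsupport_fderiv_apply_subset ℝ _).trans ψ.2.2⟩
  map_add' f g := by
    ext y
    change fderiv ℝ (f.1 + g.1) y _ = _
    rw [fderiv_add (f.2.1.differentiable (by simp) y) (g.2.1.differentiable (by simp) y)]
    rfl
  map_smul' c f := by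
    ext y
    change fderiv ℝ (c • f.1) y _ = _
    rw [fderiv_const_smul (f.2.1.differentiable (by simp) y)]
    rfl

theorem coe_testDeriv (r : ℝ) (i : Fin m) (ψ : testSpace m r) :
    (testDeriv r i ψ : Evec m → ℝ) = pdv i ψ := rfl

theorem pdv_pdv_eq {g : Evec m → ℝ} (hg : ContDiff ℝ ∞ g) (i j : Fin m) (y : Evec m) :
    pdv i (pdv j g) y = fderiv ℝ (fderiv ℝ g) y (EuclideanSpace.single i 1)
      (EuclideanSpace.single j 1) := by
  have h : DifferentiableAt ℝ (fderiv ℝ g) y :=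
    (hg.fderiv_right (m := ∞) (by simp)).differentiable (by simp) y
  rw [pdv, show pdv j g = fun y => fderiv ℝ g y (EuclideanSpace.single j 1) from rfl,
    fderiv_clm_apply h (differentiableAt_const _)]
  simp

theorem testDeriv_comm (r : ℝ) (i j : Fin m) (ψ : testSpace m r) :
    testDeriv r i (testDeriv r j ψ) = testDeriv r j (testDeriv r i ψ) := by
  ext y
  change pdv i (pdv j ψ.1) y = pdv j (pdv i ψ.1) y
  rw [pdv_pdv_eq ψ.2.1, pdv_pdv_eq ψ.2.1]
  exact (ψ.2.1.contDiffAt.isSymmSndFDerivAt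
    (by rw [minSmoothness_of_isRCLikeNormedField]; exact WithTop.coe_le_coe.2 le_top)) _ _

theorem coe_sum_testDeriv_pow (r : ℝ) (n : ℕ) (ψ : testSpace m r) :
    ((((∑ i, testDeriv r i * testDeriv r i) ^ n) ψ : testSpace m r) : Evec m → ℝ)
      = lapl^[n] (ψ : Evec m → ℝ) := by
  induction n with
  | zero => simp
  | succ n ih =>
    rw [Function.iterate_succ_apply', ← ih, pow_succ', Module.End.mul_apply,
      LinearMap.sum_apply]
    funext y
    simp [lapl, coe_testDeriv]

theorem integrable_mul_testSpace {c : Evec m → ℝ} (hc : Continuous c) (b : Evec m) {r : ℝ}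
    (ψ : testSpace m r) : Integrable fun y => c (b - y) * (ψ : Evec m → ℝ) y :=
  ((hc.comp (by fun_prop)).mul ψ.2.1.continuous).integrable_of_hasCompactSupport
    (hasCompactSupport_of_tsupport_subset ψ.2.2).mul_left

theorem contDiff_pdv_of_succ {n : ℕ} (i : Fin m) {g : Evec m → ℝ} (hg : ContDiff ℝ (n + 1) g) :
    ContDiff ℝ n (pdv i g) :=
  (hg.fderiv_right (by simp)).clm_apply contDiff_const

theorem integral_mul_testDeriv {c : Evec m → ℝ} (hc : ContDiff ℝ 1 c) (b : Evec m) {r : ℝ}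
    (i : Fin m) (ψ : testSpace m r) :
    ∫ y, c (b - y) * (testDeriv r i ψ : Evec m → ℝ) y
      = ∫ y, pdv i c (b - y) * (ψ : Evec m → ℝ) y := by
  have hp : Continuous (pdv i c) := (contDiff_pdv_of_succ (n := 0) i (by simpa using hc)).continuous
  have hfd : ∀ y, fderiv ℝ (fun y => c (b - y)) y (EuclideanSpace.single i 1)
      = -pdv i c (b - y) := by
    intro y
    have h := ((hc.differentiable (by simp) (b - y)).hasFDerivAt).comp y
      ((hasFDerivAt_id y).const_sub b)
    rw [show (fun y => c (b - y)) = c ∘ (HSub.hSub b) from rfl, h.fderiv]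
    simp [pdv]
  have h := integral_mul_fderiv_eq_neg_fderiv_mul_of_integrable
    (μ := (volume : Measure (Evec m))) (f := fun y => c (b - y)) (g := (ψ : Evec m → ℝ))
    (v := EuclideanSpace.single i 1) ?_ (integrable_mul_testSpace hc.continuous b (testDeriv r i ψ))
    (integrable_mul_testSpace hc.continuous b ψ)
    (fun y _ => (hc.differentiable (by simp) _).comp y (by fun_prop))
    (fun y _ => ψ.2.1.differentiable (by simp) y)
  · simp only [hfd, neg_mul, integral_neg, neg_neg] at h
    exact h
  · simp only [hfd, neg_mul]
    exact (integrable_mul_testSpace hp b ψ).neg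

/-- The polynomial-valued functional `ψ ↦ Σ_s (c_s * ψ)(b) u^s`. -/
def coeffFun (S : Finset (Fin m →₀ ℕ)) (c : (Fin m →₀ ℕ) → Evec m → ℝ)
    (hc : ∀ s, Continuous (c s)) (b : Evec m) (r : ℝ) : PolyFun (testSpace m r) m where
  toFun ψ := ∑ s ∈ S, (∫ y, c s (b - y) * (ψ : Evec m → ℝ) y) • monomial s 1
  map_add' f g := by
    simp only [Submodule.coe_add, Pi.add_apply, mul_add]
    simp_rw [fun s => integral_add (integrable_mul_testSpace (hc s) b f)
      (integrable_mul_testSpace (hc s) b g), add_smul, Finset.sum_add_distrib]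
  map_smul' a f := by
    simp only [Submodule.coe_smul, Pi.smul_apply, smul_eq_mul, mul_left_comm _ a,
      integral_const_mul, Finset.smul_sum, smul_smul, RingHom.id_apply]

theorem coeffFun_apply (S : Finset (Fin m →₀ ℕ)) (c : (Fin m →₀ ℕ) → Evec m → ℝ)
    (hc : ∀ s, Continuous (c s)) (b : Evec m) (r : ℝ) (ψ : testSpace m r) :
    coeffFun S c hc b r ψ = ∑ s ∈ S, (∫ y, c s (b - y) * (ψ : Evec m → ℝ) y) • monomial s 1 := rfl

/-- A polynomial vanishing on a ball around the origin is zero. -/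
theorem mvPolynomial_eq_zero_of_ball {p : MvPolynomial (Fin m) ℝ} {r : ℝ} (hr : 0 < r)
    (h : ∀ u ∈ ball (0 : Evec m) r, MvPolynomial.eval (fun i => u i) p = 0) : p = 0 := by
  obtain ⟨ε, hε, hsub⟩ : ∃ ε > 0, ∀ x : Fin m → ℝ, (∀ i, x i ∈ Set.Ioo 0 ε) →
      WithLp.toLp 2 x ∈ ball (0 : Evec m) r := by
    have hcont : Continuous (fun x : Fin m → ℝ => (WithLp.toLp 2 x : Evec m)) :=
      PiLp.continuous_toLp 2 _
    have hopen := IsOpen.preimage (t := ball (0 : Evec m) r) hcont isOpen_ball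
    obtain ⟨ε, hε, hb⟩ := Metric.isOpen_iff.1 hopen 0 (by simpa using hr)
    refine ⟨ε, hε, fun x hx => hb ?_⟩
    rw [mem_ball_zero_iff, pi_norm_lt_iff hε]
    intro i
    rw [Real.norm_of_nonneg (hx i).1.le]
    exact (hx i).2
  refine MvPolynomial.funext_set (fun _ => Set.Ioo 0 ε) (fun _ => Set.Ioo_infinite hε)
    fun x hx => ?_
  rw [map_zero]
  exact h _ (hsub x fun i => hx i (Set.mem_univ i))

/-- The coefficient of `∂_i ∂_j c_s` in the bosonic Laplacian of `Σ_s c_s(x) u^s`. -/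
def bosonicCoeff (k : ℕ) (u : Evec m) (s : Fin m →₀ ℕ) (i j : Fin m) : ℝ :=
  (if i = j then MvPolynomial.eval (fun l => u l) (monomial s 1) else 0)
    - 4 / ((m : ℝ) + 2 * k - 2) *
      (u i * MvPolynomial.eval (fun l => u l) (pderiv j (monomial s 1)))
    + 4 * ‖u‖ ^ 2 / (((m : ℝ) + 2 * k - 2) * ((m : ℝ) + 2 * k - 4)) *
      MvPolynomial.eval (fun l => u l) (pderiv i (pderiv j (monomial s 1)))

theorem sum_bosonicCoeff (k : ℕ) (u : Evec m) (S : Finset (Fin m →₀ ℕ))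
    (A : (Fin m →₀ ℕ) → Fin m → Fin m → ℝ) :
    ∑ s ∈ S, ∑ i, ∑ j, bosonicCoeff k u s i j * A s i j =
      (∑ i, ∑ s ∈ S, A s i i * MvPolynomial.eval (fun l => u l) (monomial s 1))
      - 4 / ((m : ℝ) + 2 * k - 2) * ∑ i, ∑ j, u i *
        ∑ s ∈ S, A s i j * MvPolynomial.eval (fun l => u l) (pderiv j (monomial s 1))
      + 4 * ‖u‖ ^ 2 / (((m : ℝ) + 2 * k - 2) * ((m : ℝ) + 2 * k - 4)) * ∑ i, ∑ j,
        ∑ s ∈ S, A s i j * MvPolynomial.eval (fun l => u l) (pderiv i (pderiv j (monomial s 1))) := by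
  have hswap : ∀ B : (Fin m →₀ ℕ) → Fin m → Fin m → ℝ,
      ∑ s ∈ S, ∑ i, ∑ j, B s i j = ∑ i, ∑ j, ∑ s ∈ S, B s i j := by
    intro B
    rw [Finset.sum_comm]
    exact Finset.sum_congr rfl fun i _ => Finset.sum_comm
  rw [hswap]
  simp only [Finset.mul_sum, bosonicCoeff, add_mul, sub_mul, Finset.sum_add_distrib,
    Finset.sum_sub_distrib]
  congr 1
  · congr 1
    · refine Finset.sum_congr rfl fun i _ => ?_
      rw [Finset.sum_comm]
      refine Finset.sum_congr rfl fun s _ => ?_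
      simp [mul_comm]
    · exact Finset.sum_congr rfl fun i _ => Finset.sum_congr rfl fun j _ =>
        Finset.sum_congr rfl fun s _ => by ring
  · exact Finset.sum_congr rfl fun i _ => Finset.sum_congr rfl fun j _ =>
        Finset.sum_congr rfl fun s _ => by ring

/-- The coefficients of a solution of the bosonic Laplace equation are weakly polyharmonic. -/
theorem integral_mul_lapl_iterate_eq_zero (hm : 4 < m) (k : ℕ) (S : Finset (Fin m →₀ ℕ))
    (hS : ∀ s ∈ S, s.degree = k) (c : (Fin m →₀ ℕ) → Evec m → ℝ) (hc : ∀ s, ContDiff ℝ 2 (c s))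
    (b : Evec m) (r : ℝ)
    (hD : ∀ x ∈ closedBall b r, ∀ u ∈ ball (0 : Evec m) 1,
      ∑ s ∈ S, ∑ i, ∑ j, bosonicCoeff k u s i j * pdv i (pdv j (c s)) x = 0)
    {η : Evec m → ℝ} (hη : ContDiff ℝ ∞ η) (hηs : tsupport η ⊆ closedBall 0 r)
    {s : Fin m →₀ ℕ} (hs : s ∈ S) :
    ∫ y, c s (b - y) * lapl^[k + 1] η y = 0 := by
  have hcc : ∀ s, Continuous (c s) := fun s => (hc s).continuous
  have hc1 : ∀ s j, ContDiff ℝ 1 (pdv j (c s)) := fun s j =>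
    contDiff_pdv_of_succ (n := 1) j (by simpa [one_add_one_eq_two] using hc s)
  have hc2 : ∀ s i j, Continuous (pdv i (pdv j (c s))) := fun s i j =>
    (contDiff_pdv_of_succ (n := 0) i (by simpa using hc1 s j)).continuous
  set F := coeffFun S c hcc b r with hF
  have hhom : ∀ ψ, (F ψ).IsHomogeneous k := by
    intro ψ
    rw [hF, coeffFun_apply]
    refine MvPolynomial.IsHomogeneous.sum _ _ _ fun s hs => ?_
    rw [MvPolynomial.smul_monomial]
    exact MvPolynomial.isHomogeneous_monomial _ (hS s hs)
  have hFd : ∀ (i j : Fin m) ψ, F (testDeriv r j (testDeriv r i ψ)) =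
      ∑ s ∈ S, (∫ y, pdv i (pdv j (c s)) (b - y) * (ψ : Evec m → ℝ) y) • monomial s 1 := by
    intro i j ψ
    rw [hF, coeffFun_apply]
    refine Finset.sum_congr rfl fun s _ => ?_
    rw [integral_mul_testDeriv ((hc s).of_le (by norm_num)), integral_mul_testDeriv (hc1 s j)]
  have hzero : ∀ ψ, opS (testDeriv r) F ψ
      - (4 / ((m : ℝ) + 2 * k - 2)) • opX (testDeriv r) (opY (testDeriv r) F) ψ
      + (4 / (((m : ℝ) + 2 * k - 2) * ((m : ℝ) + 2 * k - 4))) •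
          opN (opY (testDeriv r) (opY (testDeriv r) F)) ψ = 0 := by
    intro ψ
    refine mvPolynomial_eq_zero_of_ball one_pos fun u hu => ?_
    have hintegral : ∑ s ∈ S, ∑ i, ∑ j, bosonicCoeff k u s i j *
        ∫ y, pdv i (pdv j (c s)) (b - y) * (ψ : Evec m → ℝ) y = 0 := by
      have hi := fun s i j => (integrable_mul_testSpace (hc2 s i j) b ψ).const_mul
        (bosonicCoeff k u s i j)
      simp only [← integral_const_mul]
      simp_rw [← integral_finsetSum _ fun j _ => hi _ _ j]
      simp_rw [← integral_finsetSum _ fun i _ => integrable_finsetSum _ fun j _ => hi _ i j]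
      rw [← integral_finsetSum _ fun s _ => integrable_finsetSum _ fun i _ =>
        integrable_finsetSum _ fun j _ => hi s i j]
      refine integral_eq_zero_of_ae (Eventually.of_forall fun y => ?_)
      simp only [← mul_assoc, ← Finset.sum_mul, Pi.zero_apply]
      by_cases hy : y ∈ closedBall (0 : Evec m) r
      · rw [hD (b - y) (by simpa [mem_closedBall, dist_eq_norm] using hy) u hu, zero_mul]
      · rw [image_eq_zero_of_notMem_tsupport fun h => hy (ψ.2.2 h), mul_zero]
    rw [sum_bosonicCoeff] at hintegral
    rw [← hintegral, opS_apply, opX_apply, opN_apply]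
    simp only [opY_apply, hFd, map_add, map_sub, map_sum, map_mul,
      MvPolynomial.smul_eval, MvPolynomial.eval_X, Derivation.map_smul]
    have hn : ∑ i : Fin m, u i * u i = ‖u‖ ^ 2 := by
      rw [EuclideanSpace.norm_sq_eq]
      exact Finset.sum_congr rfl fun i _ => by rw [Real.norm_eq_abs, sq_abs, sq]
    rw [hn]
    simp only [Finset.mul_sum]
    congr 1
    refine Finset.sum_congr rfl fun i _ => Finset.sum_congr rfl fun j _ =>
        Finset.sum_congr rfl fun s _ => by ring
  have h := polyharmonic_of_bosonic (testDeriv r) (testDeriv_comm r) hm k F hhom hzero ⟨η, hη, hηs⟩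
  rw [hF, coeffFun_apply, coe_sum_testDeriv_pow] at h
  have h' := congrArg (MvPolynomial.coeff s) h
  simpa [MvPolynomial.coeff_sum, MvPolynomial.coeff_monomial, hs] using h'

end Weak

section Estimates

open scoped ContDiff Convolution
open MvPolynomial (monomial pderiv)

variable {m : ℕ}

/-- The composite of the powers `(P i)^[α i]`. -/
def multiIter {T : Type*} (P : Fin m → T → T) (α : Fin m → ℕ) (g : T) : T :=
  (List.finRange m).foldr (fun i g => (P i)^[α i] g) g

theorem multiIter_induction {T U : Type*} {P : Fin m → T → T} {Q : Fin m → U → U}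
    (Rel : T → U → Prop) (h : ∀ i x y, Rel x y → Rel (P i x) (Q i y)) (α : Fin m → ℕ)
    {x : T} {y : U} (hxy : Rel x y) : Rel (multiIter P α x) (multiIter Q α y) := by
  unfold multiIter
  induction List.finRange m with
  | nil => exact hxy
  | cons i L ih =>
    simp only [List.foldr_cons]
    induction α i with
    | zero => exact ih
    | succ n ihn =>
      rw [Function.iterate_succ_apply', Function.iterate_succ_apply']
      exact h i _ _ ihn

theorem multiIter_succ (α : Fin m → ℕ) (n : ℕ) :
    multiIter (fun _ => Nat.succ) α n = n + ∑ i, α i := by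
  rw [Fin.sum_univ_def, multiIter]
  induction List.finRange m with
  | nil => simp
  | cons i L ih =>
    rw [List.foldr_cons, ih, Nat.succ_iterate]
    simp only [List.map_cons, List.sum_cons]
    omega

theorem differentiable_eval (p : MvPolynomial (Fin m) ℝ) :
    Differentiable ℝ fun u : Evec m => MvPolynomial.eval (fun i => u i) p := by
  induction p using MvPolynomial.induction_on with
  | C a => simp
  | add p q hp hq =>
    simp only [map_add]
    exact hp.fun_add hq
  | mul_X p i hp =>
    simp only [map_mul, MvPolynomial.eval_X]
    exact hp.mul (by fun_prop)

theorem pdv_eval (j : Fin m) (p : MvPolynomial (Fin m) ℝ) (u : Evec m) :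
    pdv j (fun u : Evec m => MvPolynomial.eval (fun i => u i) p) u
      = MvPolynomial.eval (fun i => u i) (pderiv j p) := by
  induction p using MvPolynomial.induction_on with
  | C a => simp [pdv]
  | add p q hp hq =>
    simp only [pdv, map_add] at *
    rw [fderiv_fun_add (differentiable_eval p u) (differentiable_eval q u),
      add_apply, hp, hq]
  | mul_X p i hp =>
    have hX : HasFDerivAt (fun u : Evec m => u i) (EuclideanSpace.proj i : Evec m →L[ℝ] ℝ) u :=
      (EuclideanSpace.proj i : Evec m →L[ℝ] ℝ).hasFDerivAt
    simp only [pdv, map_mul, MvPolynomial.eval_X] at *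
    rw [fderiv_fun_mul (differentiable_eval p u) hX.differentiableAt, hX.fderiv,
      add_apply, smul_apply,
      smul_apply, hp, Derivation.leibniz, MvPolynomial.pderiv_X]
    by_cases hij : i = j
    · subst hij
      simp
    · simp [hij]

/-- `g(x, u) = Σ_s c_s(x) q_s(u)` for `x ∈ W` and `u` in the unit ball. -/
def HasRep (W : Set (Evec m)) (S : Finset (Fin m →₀ ℕ)) (g : Evec m → Evec m → ℝ)
    (c : (Fin m →₀ ℕ) → Evec m → ℝ) (q : (Fin m →₀ ℕ) → MvPolynomial (Fin m) ℝ) : Prop :=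
  ∀ x ∈ W, ∀ u ∈ ball (0 : Evec m) 1,
    g x u = ∑ s ∈ S, c s x * MvPolynomial.eval (fun i => u i) (q s)

variable {W : Set (Evec m)} {S : Finset (Fin m →₀ ℕ)} {g : Evec m → Evec m → ℝ}
  {c : (Fin m →₀ ℕ) → Evec m → ℝ} {q : (Fin m →₀ ℕ) → MvPolynomial (Fin m) ℝ}

theorem HasRep.pd1 (h : HasRep W S g c q) (hW : IsOpen W) (hc : ∀ s, Differentiable ℝ (c s))
    (i : Fin m) : HasRep W S (pd1 i g) (fun s => pdv i (c s)) q := by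
  intro x hx u hu
  have he : (fun x₁ => g x₁ u) =ᶠ[𝓝 x]
      fun x₁ => ∑ s ∈ S, c s x₁ * MvPolynomial.eval (fun i => u i) (q s) := by
    filter_upwards [hW.mem_nhds hx] with y hy using h y hy u hu
  rw [_root_.pd1, he.fderiv_eq, fderiv_fun_sum fun s _ => (hc s x).mul_const _,
    sum_apply]
  refine Finset.sum_congr rfl fun s _ => ?_
  rw [fderiv_mul_const (hc s x)]
  simp [pdv, mul_comm]

theorem HasRep.pd2 (h : HasRep W S g c q) (j : Fin m) :
    HasRep W S (pd2 j g) c (fun s => pderiv j (q s)) := by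
  intro x hx u hu
  have he : (fun u₁ => g x u₁) =ᶠ[𝓝 u]
      fun u₁ => ∑ s ∈ S, c s x * MvPolynomial.eval (fun i => u₁ i) (q s) := by
    filter_upwards [isOpen_ball.mem_nhds hu] with v hv using h x hx v hv
  rw [_root_.pd2, he.fderiv_eq,
    fderiv_fun_sum fun s _ => (differentiable_eval (q s) u).const_mul _,
    sum_apply]
  refine Finset.sum_congr rfl fun s _ => ?_
  rw [fderiv_const_mul (differentiable_eval (q s) u), ← pdv_eval]
  simp [pdv]

theorem HasRep.Dx (h : HasRep W S g c q) (hW : IsOpen W) (hc : ∀ s, ContDiff ℝ ∞ (c s))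
    (α : Fin m → ℕ) : HasRep W S (Dx α g) (fun s => multiIter pdv α (c s)) q := by
  have key := multiIter_induction (P := _root_.pd1 (m := m))
    (Q := fun i (c : (Fin m →₀ ℕ) → Evec m → ℝ) s => pdv i (c s))
    (fun g c => HasRep W S g c q ∧ ∀ s, ContDiff ℝ ∞ (c s))
    (fun i g c h => ⟨h.1.pd1 hW (fun s => (h.2 s).differentiable (by simp)) i,
      fun s => contDiff_pdv i (h.2 s)⟩) α ⟨h, hc⟩
  have heq : multiIter (fun i (c : (Fin m →₀ ℕ) → Evec m → ℝ) s => pdv i (c s)) α c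
      = fun s => multiIter pdv α (c s) := funext fun s =>
    multiIter_induction (fun (c : (Fin m →₀ ℕ) → Evec m → ℝ) d => c s = d)
      (fun i x y h => by rw [h]) α rfl
  rw [heq] at key
  exact key.1

theorem HasRep.Dv (h : HasRep W S g c q) (β : Fin m → ℕ) :
    HasRep W S (Dv β g) c (fun s => multiIter (fun j p => pderiv j p) β (q s)) := by
  have key := multiIter_induction (P := _root_.pd2 (m := m))
    (Q := fun j (q : (Fin m →₀ ℕ) → MvPolynomial (Fin m) ℝ) s => pderiv j (q s))
    (fun g q => HasRep W S g c q) (fun j g c h => h.pd2 j) β h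
  have heq : multiIter (fun j (q : (Fin m →₀ ℕ) → MvPolynomial (Fin m) ℝ) s => pderiv j (q s)) β q
      = fun s => multiIter (fun j p => pderiv j p) β (q s) := funext fun s =>
    multiIter_induction (fun (q : (Fin m →₀ ℕ) → MvPolynomial (Fin m) ℝ) p => q s = p)
      (fun i x y h => by rw [h]) β rfl
  rw [heq] at key
  exact key

theorem HasRep.sum_bosonicCoeff_eq_zero {k : ℕ} (h : HasRep W S g c fun s => monomial s 1)
    (hW : IsOpen W) (hc : ∀ s, ContDiff ℝ 2 (c s))
    {x u : Evec m} (hx : x ∈ W) (hu : u ∈ ball (0 : Evec m) 1) (hD : Dk m k g x u = 0) :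
    ∑ s ∈ S, ∑ i, ∑ j, bosonicCoeff k u s i j * pdv i (pdv j (c s)) x = 0 := by
  have hc0 : ∀ s, Differentiable ℝ (c s) := fun s => (hc s).differentiable (by simp)
  have hc1 : ∀ j s, Differentiable ℝ (pdv j (c s)) := fun j s =>
    (contDiff_pdv_of_succ (n := 1) j
      (by simpa [one_add_one_eq_two] using hc s)).differentiable (by simp)
  rw [sum_bosonicCoeff, ← hD, Dk]
  congr 1
  · congr 1
    · exact Finset.sum_congr rfl fun i _ =>
        (((h.pd1 hW hc0 i).pd1 hW (hc1 i) i) x hx u hu).symm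
    · congr 1
      refine Finset.sum_congr rfl fun i _ => Finset.sum_congr rfl fun j _ => ?_
      rw [(((h.pd1 hW hc0 j).pd2 j).pd1 hW (hc1 j) i) x hx u hu]
  · congr 1
    refine Finset.sum_congr rfl fun i _ => Finset.sum_congr rfl fun j _ => ?_
    rw [((((h.pd1 hW hc0 j).pd2 j).pd1 hW (hc1 j) i).pd2 i) x hx u hu]

theorem contDiff_multiIter_pdv {g : Evec m → ℝ} (hg : ContDiff ℝ ∞ g) (α : Fin m → ℕ) :
    ContDiff ℝ ∞ (multiIter pdv α g) :=
  multiIter_induction (fun g _ => ContDiff ℝ ∞ g)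
    (fun i _ _ h => contDiff_pdv i h) α (Q := fun _ => id) (y := ()) hg

theorem tsupport_multiIter_pdv_subset (g : Evec m → ℝ) (α : Fin m → ℕ) :
    tsupport (multiIter pdv α g) ⊆ tsupport g :=
  multiIter_induction (fun g' g => tsupport g' ⊆ tsupport g)
    (fun _ _ _ h => (tsupport_fderiv_apply_subset ℝ _).trans h) α (Q := fun _ => id)
    (y := g) subset_rfl |>.trans (by
      rw [show multiIter (fun _ => id) α g = g from
        multiIter_induction (fun h _ => h = g) (fun _ _ _ h => h) α (Q := fun _ => id) (y := ()) rfl])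

theorem multiIter_pdv_mollifier {φ : Evec m → ℝ} (hφ : ContDiff ℝ ∞ φ) (R : ℝ) (α : Fin m → ℕ) :
    multiIter pdv α (mollifier φ R)
      = fun y => R⁻¹ ^ (m + ∑ i, α i) * multiIter pdv α φ (R⁻¹ • y) := by
  have key := multiIter_induction (P := pdv (m := m))
    (Q := fun i (p : (Evec m → ℝ) × ℕ) => (pdv i p.1, p.2.succ))
    (fun g p => ContDiff ℝ ∞ p.1 ∧ g = fun y => R⁻¹ ^ p.2 * p.1 (R⁻¹ • y))
    (fun i g p h => ⟨contDiff_pdv i h.1, by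
      rw [h.2, pdv_const_mul i _ (contDiff_comp_smul h.1 _), pdv_comp_smul]
      funext y
      rw [pow_succ]
      ring⟩) α (x := mollifier φ R) (y := (φ, m)) ⟨hφ, by simp; rfl⟩
  have h1 := multiIter_induction (P := fun i (p : (Evec m → ℝ) × ℕ) => (pdv i p.1, p.2.succ))
    (Q := pdv) (fun p g => p.1 = g) (fun i x y h => by rw [← h]) α (x := (φ, m)) rfl
  have h2 := multiIter_induction (P := fun i (p : (Evec m → ℝ) × ℕ) => (pdv i p.1, p.2.succ))
    (Q := fun _ => Nat.succ) (fun p g => p.2 = g) (fun i x y h => by rw [← h]) α (x := (φ, m)) rfl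
  rw [key.2, h1, h2, multiIter_succ]

theorem pdv_convolution {c g : Evec m → ℝ} (hc : Continuous c) (hg : ContDiff ℝ ∞ g)
    (hgs : HasCompactSupport g) (i : Fin m) :
    pdv i (c ⋆[ContinuousLinearMap.mul ℝ ℝ] g) = c ⋆[ContinuousLinearMap.mul ℝ ℝ] pdv i g := by
  funext x
  rw [pdv, (hgs.hasFDerivAt_convolution_right _ hc.locallyIntegrable
    (hg.of_le (by exact_mod_cast le_top)) x).fderiv,
    convolution_precompR_apply _ hc.locallyIntegrable (hgs.fderiv ℝ)
      (hg.continuous_fderiv (by simp))]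
  rfl

theorem multiIter_pdv_convolution {c g : Evec m → ℝ} (hc : Continuous c) (hg : ContDiff ℝ ∞ g)
    (hgs : HasCompactSupport g) (α : Fin m → ℕ) :
    multiIter pdv α (c ⋆[ContinuousLinearMap.mul ℝ ℝ] g)
      = c ⋆[ContinuousLinearMap.mul ℝ ℝ] multiIter pdv α g :=
  (multiIter_induction (P := pdv (m := m)) (Q := pdv)
    (fun h g => ContDiff ℝ ∞ g ∧ HasCompactSupport g ∧ h = c ⋆[ContinuousLinearMap.mul ℝ ℝ] g)
    (fun i h g hg => ⟨contDiff_pdv i hg.1, hg.2.1.fderiv_apply ℝ _, by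
      rw [hg.2.2, pdv_convolution hc hg.1 hg.2.1]⟩) α ⟨hg, hgs, rfl⟩).2.2

theorem contDiff_mollifier {φ : Evec m → ℝ} (hφ : ContDiff ℝ ∞ φ) (R : ℝ) :
    ContDiff ℝ ∞ (mollifier φ R) :=
  contDiff_const.mul (contDiff_comp_smul hφ _)

theorem hasCompactSupport_mollifier {φ : Evec m → ℝ} (hφs : tsupport φ ⊆ closedBall 0 1) {R : ℝ}
    (hR : 0 < R) : HasCompactSupport (mollifier φ R) :=
  hasCompactSupport_of_tsupport_subset ((tsupport_mul_subset_right (f := fun _ => (R ^ m)⁻¹)).trans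
    (tsupport_comp_inv_smul_subset hφs hR))

/-- Derivative bounds for functions mollified at scale `R`. -/
theorem exists_abs_multiIter_pdv_convolution_le {φ : Evec m → ℝ} (hφ : ContDiff ℝ ∞ φ)
    (hφs : tsupport φ ⊆ closedBall 0 1) (α : Fin m → ℕ) :
    ∃ C : ℝ, 0 ≤ C ∧ ∀ (c : Evec m → ℝ), Continuous c → ∀ (a : Evec m) (R : ℝ), 0 < R →
      |multiIter pdv α (c ⋆[ContinuousLinearMap.mul ℝ ℝ] mollifier φ R) a|
        ≤ C * R⁻¹ ^ (m + ∑ i, α i) * ∫ x in closedBall a R, |c x| := by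
  have hsupp := (tsupport_multiIter_pdv_subset φ α).trans hφs
  obtain ⟨C, hC⟩ := (hasCompactSupport_of_tsupport_subset hsupp).exists_bound_of_continuous
    (contDiff_multiIter_pdv hφ α).continuous
  refine ⟨C, (norm_nonneg _).trans (hC 0), fun c hc a R hR => ?_⟩
  rw [multiIter_pdv_convolution hc (contDiff_mollifier hφ R) (hasCompactSupport_mollifier hφs hR),
    multiIter_pdv_mollifier hφ, convolution_def, ← integral_const_mul,
    ← integral_indicator measurableSet_closedBall, ← Real.norm_eq_abs]
  refine norm_integral_le_of_norm_le ?_ (Eventually.of_forall fun t => ?_)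
  · refine IntegrableOn.integrable_indicator ?_ measurableSet_closedBall
    exact (Continuous.continuousOn (by fun_prop)).integrableOn_compact (isCompact_closedBall _ _)
  · simp only [ContinuousLinearMap.mul_apply', norm_mul, Real.norm_eq_abs]
    by_cases ht : t ∈ closedBall a R
    · rw [Set.indicator_of_mem ht, abs_of_nonneg (a := R⁻¹ ^ _) (by positivity)]
      have := hC (R⁻¹ • (a - t))
      rw [Real.norm_eq_abs] at this
      calc _ = |multiIter pdv α φ (R⁻¹ • (a - t))| * (R⁻¹ ^ (m + ∑ i, α i) * |c t|) := by ring
        _ ≤ C * (R⁻¹ ^ (m + ∑ i, α i) * |c t|) := by gcongr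
        _ = _ := by ring
    · rw [Set.indicator_of_notMem ht, image_eq_zero_of_notMem_tsupport (f := multiIter pdv α φ)]
      · simp
      · intro h
        have h1 := hsupp h
        rw [mem_closedBall_zero_iff, norm_smul, norm_inv, Real.norm_of_nonneg hR.le,
          inv_mul_le_one₀ hR] at h1
        exact ht (by rwa [mem_closedBall, dist_eq_norm, norm_sub_rev])

end Estimates

section Coefficients

open scoped ContDiff
open MvPolynomial (monomial pderiv)

variable {m : ℕ}

theorem continuous_eval (p : MvPolynomial (Fin m) ℝ) :
    Continuous fun u : Evec m => MvPolynomial.eval (fun i => u i) p :=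
  (differentiable_eval p).continuous

theorem eval_monomial_smul (s : Fin m →₀ ℕ) (a t : ℝ) (x : Evec m) :
    MvPolynomial.eval (fun i => (t • x) i) (monomial s a)
      = t ^ s.degree * MvPolynomial.eval (fun i => x i) (monomial s a) := by
  rw [MvPolynomial.eval_monomial, MvPolynomial.eval_monomial,
    Finsupp.prod_fintype _ _ fun i => pow_zero _, Finsupp.prod_fintype _ _ fun i => pow_zero _]
  simp only [PiLp.smul_apply, smul_eq_mul, mul_pow, Finset.prod_mul_distrib,
    Finset.prod_pow_eq_pow_sum, Finsupp.degree_eq_sum]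
  ring

/-- The exponents of degree `k` in `m` variables. -/
def exponents (m k : ℕ) : Finset (Fin m →₀ ℕ) := Finset.univ.finsuppAntidiag k

theorem mem_exponents {k : ℕ} {s : Fin m →₀ ℕ} : s ∈ exponents m k ↔ s.degree = k := by
  simp [exponents, Finsupp.degree_eq_sum]

/-- A polynomial function homogeneous of degree `k` is given by its degree `k` coefficients. -/
theorem eval_eq_sum_exponents {k : ℕ} {P : MvPolynomial (Fin m) ℝ}
    (h : ∀ (t : ℝ) (x : Evec m), MvPolynomial.eval (fun i => (t • x) i) P
      = t ^ k * MvPolynomial.eval (fun i => x i) P) (x : Evec m) :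
    MvPolynomial.eval (fun i => x i) P = ∑ s ∈ exponents m k,
      P.coeff s * MvPolynomial.eval (fun i => x i) (monomial s 1) := by
  have hmon : ∀ s, MvPolynomial.eval (fun i => x i) (monomial s (P.coeff s))
      = P.coeff s * MvPolynomial.eval (fun i => x i) (monomial s 1) := by
    intro s
    simp [MvPolynomial.eval_monomial]
  have hpoly : (∑ s ∈ P.support, Polynomial.monomial s.degree
        (MvPolynomial.eval (fun i => x i) (monomial s (P.coeff s))) : Polynomial ℝ)
      = Polynomial.monomial k (MvPolynomial.eval (fun i => x i) P) := by
    refine Polynomial.funext fun t => ?_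
    rw [Polynomial.eval_finsetSum]
    simp only [Polynomial.eval_monomial]
    rw [mul_comm _ (t ^ k), ← h t x]
    conv_rhs => rw [P.as_sum, map_sum]
    exact Finset.sum_congr rfl fun s _ => by rw [eval_monomial_smul, mul_comm]
  have hk := congrArg (fun p => Polynomial.coeff p k) hpoly
  simp only [Polynomial.finsetSum_coeff, Polynomial.coeff_monomial, if_true, hmon] at hk
  rw [← hk, ← Finset.sum_filter]
  refine Finset.sum_subset_zero_on_sdiff (fun s hs => ?_) (fun s hs => ?_) fun _ _ => rfl
  · exact mem_exponents.2 (Finset.mem_filter.1 hs).2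
  · rw [Finset.mem_sdiff, Finset.mem_filter, mem_exponents, not_and'] at hs
    rw [MvPolynomial.notMem_support_iff.1 (hs.2 hs.1), zero_mul]

/-- Evaluation at `u` of the polynomial with coefficients `q`. -/
def evalLin (S : Finset (Fin m →₀ ℕ)) (u : Evec m) : (S → ℝ) →ₗ[ℝ] ℝ :=
  ∑ s : S, MvPolynomial.eval (fun i => u i) (monomial s.1 1) • LinearMap.proj s

theorem evalLin_apply (S : Finset (Fin m →₀ ℕ)) (u : Evec m) (q : S → ℝ) :
    evalLin S u q = ∑ s : S, q s * MvPolynomial.eval (fun i => u i) (monomial s.1 1) := by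
  simp only [evalLin, LinearMap.sum_apply, LinearMap.smul_apply, LinearMap.proj_apply,
    smul_eq_mul, mul_comm]

theorem evalLin_restrict (S : Finset (Fin m →₀ ℕ)) (u : Evec m) (q : (Fin m →₀ ℕ) → ℝ) :
    evalLin S u (fun s => q s)
      = ∑ s ∈ S, q s * MvPolynomial.eval (fun i => u i) (monomial s 1) := by
  rw [evalLin_apply]
  exact Finset.sum_coe_sort S fun s => q s * MvPolynomial.eval (fun i => u i) (monomial s 1)

theorem eq_zero_of_evalLin_eq_zero {S : Finset (Fin m →₀ ℕ)} {q : S → ℝ} {r : ℝ} (hr : 0 < r)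
    (h : ∀ u ∈ ball (0 : Evec m) r, evalLin S u q = 0) : q = 0 := by
  have hp : (∑ s : S, q s • monomial s.1 1 : MvPolynomial (Fin m) ℝ) = 0 :=
    mvPolynomial_eq_zero_of_ball hr fun u hu => by
      simpa [evalLin_apply, map_sum, MvPolynomial.smul_eval] using h u hu
  funext s
  have h' := congrArg (MvPolynomial.coeff s.1) hp
  simpa [MvPolynomial.coeff_sum, MvPolynomial.coeff_monomial] using h'

theorem continuous_evalLin (S : Finset (Fin m →₀ ℕ)) (q : S → ℝ) :
    Continuous fun u => evalLin S u q := by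
  simp only [evalLin_apply]
  exact continuous_finsetSum _ fun s _ => continuous_const.mul (continuous_eval _)

theorem abs_eval_monomial_le_one (s : Fin m →₀ ℕ) {u : Evec m} (hu : ‖u‖ ≤ 1) :
    |MvPolynomial.eval (fun i => u i) (monomial s 1)| ≤ 1 := by
  rw [MvPolynomial.eval_monomial, one_mul, Finsupp.prod_fintype _ _ fun i => pow_zero _,
    Finset.abs_prod]
  refine Finset.prod_le_one (fun _ _ => abs_nonneg _) fun i _ => ?_
  rw [abs_pow]
  exact pow_le_one₀ (abs_nonneg _) ((PiLp.norm_apply_le u i).trans hu)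

theorem integrableOn_ball_of_continuous {g : Evec m → ℝ} (hg : Continuous g) (a : Evec m) (r : ℝ) :
    IntegrableOn g (ball a r) :=
  (hg.continuousOn.integrableOn_compact (isCompact_closedBall a r)).mono_set ball_subset_closedBall

theorem integrableOn_evalLin_mul_monomial (S : Finset (Fin m →₀ ℕ)) (q : S → ℝ) (t : S) :
    IntegrableOn (fun u => evalLin S u q * MvPolynomial.eval (fun i => u i) (monomial t.1 1))
      (ball (0 : Evec m) (3 / 4)) :=
  integrableOn_ball_of_continuous
    ((continuous_evalLin S q).mul (continuous_eval (monomial t.1 1))) 0 (3 / 4)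

/-- The functional `q ↦ ∫ P_q(u) u^t du` on the ball of radius `3/4`. -/
def momentLin (S : Finset (Fin m →₀ ℕ)) (t : S) : (S → ℝ) →ₗ[ℝ] ℝ where
  toFun q := ∫ u in ball (0 : Evec m) (3 / 4),
    evalLin S u q * MvPolynomial.eval (fun i => u i) (monomial t.1 1)
  map_add' p q := by
    rw [← integral_add (integrableOn_evalLin_mul_monomial S p t)
      (integrableOn_evalLin_mul_monomial S q t)]
    simp only [map_add, add_mul]
  map_smul' a q := by
    simp only [map_smul, smul_eq_mul, mul_assoc, integral_const_mul, RingHom.id_apply]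

theorem momentLin_apply (S : Finset (Fin m →₀ ℕ)) (t : S) (q : S → ℝ) :
    momentLin S t q = ∫ u in ball (0 : Evec m) (3 / 4),
      evalLin S u q * MvPolynomial.eval (fun i => u i) (monomial t.1 1) := rfl

theorem eq_zero_of_momentLin_eq_zero {S : Finset (Fin m →₀ ℕ)} {q : S → ℝ}
    (h : ∀ t, momentLin S t q = 0) : q = 0 := by
  have hsq : ∫ u in ball (0 : Evec m) (3 / 4), evalLin S u q * evalLin S u q = 0 := by
    have : ∀ u, evalLin S u q * evalLin S u q = ∑ t : S, q t *
        (evalLin S u q * MvPolynomial.eval (fun i => u i) (monomial t.1 1)) := by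
      intro u
      conv_lhs => rw [evalLin_apply S u q, Finset.sum_mul_sum]
      rw [evalLin_apply]
      simp only [Finset.sum_mul, Finset.mul_sum]
      rw [Finset.sum_comm]
      exact Finset.sum_congr rfl fun _ _ => Finset.sum_congr rfl fun _ _ => by ring
    simp only [this]
    rw [integral_finsetSum _ fun t _ =>
      (integrableOn_evalLin_mul_monomial S q t).const_mul _]
    refine Finset.sum_eq_zero fun t _ => ?_
    rw [integral_const_mul]
    exact mul_eq_zero_of_right _ (h t)
  have hcont : Continuous fun u => evalLin S u q * evalLin S u q :=
    (continuous_evalLin S q).mul (continuous_evalLin S q)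
  rw [setIntegral_eq_zero_iff_of_nonneg_ae (Eventually.of_forall fun u => mul_self_nonneg _)
    (integrableOn_ball_of_continuous hcont _ _)] at hsq
  have hz := Measure.eqOn_open_of_ae_eq hsq isOpen_ball hcont.continuousOn continuousOn_const
  exact eq_zero_of_evalLin_eq_zero (by norm_num : (0 : ℝ) < 3 / 4)
    fun u hu => mul_self_eq_zero.1 (hz hu)

/-- The coefficients of a polynomial are controlled by its `L¹` norm. -/
theorem exists_abs_coeff_le (S : Finset (Fin m →₀ ℕ)) :
    ∃ C : ℝ, 0 ≤ C ∧ ∀ (q : (Fin m →₀ ℕ) → ℝ), ∀ s ∈ S, |q s| ≤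
      C * ∫ u in ball (0 : Evec m) (3 / 4),
        |∑ s ∈ S, q s * MvPolynomial.eval (fun i => u i) (monomial s 1)| := by
  have key : ∀ L : (S → ℝ) →ₗ[ℝ] ℝ, ∃ C : ℝ, 0 ≤ C ∧ ∀ q : S → ℝ, |L q| ≤
      C * ∫ u in ball (0 : Evec m) (3 / 4), |evalLin S u q| := by
    intro L
    have hintegral := fun q : S → ℝ =>
      integrableOn_ball_of_continuous (continuous_evalLin S q).abs 0 (3 / 4)
    have hL : L ∈ Submodule.span ℝ (Set.range (momentLin S)) := by
      refine FiniteDimensional.mem_span_of_iInf_ker_le_ker fun q hq => ?_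
      rw [eq_zero_of_momentLin_eq_zero fun t => (Submodule.mem_iInf _).1 hq t]
      exact zero_mem _
    induction hL using Submodule.span_induction with
    | mem L hL =>
      obtain ⟨t, rfl⟩ := hL
      refine ⟨1, zero_le_one, fun q => ?_⟩
      rw [one_mul, momentLin_apply, ← Real.norm_eq_abs]
      refine norm_integral_le_of_norm_le (hintegral q) ?_
      refine (ae_restrict_mem measurableSet_ball).mono fun u hu => ?_
      rw [norm_mul, Real.norm_eq_abs, Real.norm_eq_abs]
      refine mul_le_of_le_one_right (abs_nonneg _) (abs_eval_monomial_le_one _ ?_)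
      rw [mem_ball_zero_iff] at hu
      linarith
    | zero => exact ⟨0, le_rfl, fun q => by simp⟩
    | add L L' _ _ h h' =>
      obtain ⟨C, hC, h⟩ := h
      obtain ⟨C', hC', h'⟩ := h'
      refine ⟨C + C', add_nonneg hC hC', fun q => ?_⟩
      rw [LinearMap.add_apply, add_mul]
      exact (abs_add_le _ _).trans (add_le_add (h q) (h' q))
    | smul a L _ h =>
      obtain ⟨C, hC, h⟩ := h
      refine ⟨|a| * C, by positivity, fun q => ?_⟩
      rw [LinearMap.smul_apply, smul_eq_mul, abs_mul, mul_assoc]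
      exact mul_le_mul_of_nonneg_left (h q) (abs_nonneg a)
  choose C hC0 hC using fun s : S => key (LinearMap.proj s)
  refine ⟨∑ s, C s, Finset.sum_nonneg fun s _ => hC0 s, fun q s hs => ?_⟩
  have h := hC ⟨s, hs⟩ fun s => q s
  simp only [evalLin_restrict, LinearMap.proj_apply] at h
  refine h.trans (mul_le_mul_of_nonneg_right ?_ (integral_nonneg fun u => abs_nonneg _))
  exact Finset.single_le_sum (fun s _ => hC0 s) (Finset.mem_univ (⟨s, hs⟩ : S))

/-- A function in `C²(Ω × 𝔹, ℋ_k)` has twice differentiable coefficients. -/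
theorem C2Hk.exists_coeff {k : ℕ} {Ω : Set (Evec m)} {f : Evec m → Evec m → ℝ}
    (hf : C2Hk m k Ω f) :
    ∃ c : (Fin m →₀ ℕ) → Evec m → ℝ, (∀ s ∈ exponents m k, ContDiffOn ℝ 2 (c s) Ω) ∧
      ∀ x ∈ Ω, ∀ u ∈ closedBall (0 : Evec m) 1, f x u =
        ∑ s ∈ exponents m k, c s x * MvPolynomial.eval (fun i => u i) (monomial s 1) := by
  have hP : ∀ x, ∃ P : MvPolynomial (Fin m) ℝ, x ∈ Ω → ∀ u ∈ closedBall (0 : Evec m) 1, f x u =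
      ∑ s ∈ exponents m k, P.coeff s * MvPolynomial.eval (fun i => u i) (monomial s 1) := by
    intro x
    by_cases hx : x ∈ Ω
    · obtain ⟨p, ⟨⟨P, hP⟩, hhom, -⟩, hfp⟩ := hf.2 x hx
      refine ⟨P, fun _ u hu => ?_⟩
      rw [hfp u hu, hP, ← eval_eq_sum_exponents]
      intro t y
      rw [← hP, ← hP, hhom]
    · exact ⟨0, fun h => absurd h hx⟩
  choose P hP using hP
  refine ⟨fun s x => (P x).coeff s, fun s hs => ?_, fun x hx u hu => hP x hx u hu⟩
  have key : ∀ L : (exponents m k → ℝ) →ₗ[ℝ] ℝ,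
      ContDiffOn ℝ 2 (fun x => L fun s => (P x).coeff s) Ω := by
    intro L
    have hL : L ∈ Submodule.span ℝ
        (Set.range fun u : ball (0 : Evec m) 1 => evalLin (exponents m k) u.1) := by
      refine FiniteDimensional.mem_span_of_iInf_ker_le_ker fun q hq => ?_
      rw [eq_zero_of_evalLin_eq_zero one_pos fun u hu => (Submodule.mem_iInf _).1 hq ⟨u, hu⟩]
      exact zero_mem _
    induction hL using Submodule.span_induction with
    | mem L hL =>
      obtain ⟨⟨u, hu⟩, rfl⟩ := hL
      have hfu : ContDiffOn ℝ 2 (fun x => f x u) Ω :=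
        hf.1.comp (f := fun x => (x, u)) (by fun_prop) fun x hx => ⟨hx, hu⟩
      refine hfu.congr fun x hx => ?_
      rw [hP x hx u (ball_subset_closedBall hu)]
      exact evalLin_restrict _ _ _
    | zero => exact contDiffOn_const
    | add L L' _ _ h h' => exact h.add h'
    | smul a L _ h => exact h.const_smul a
  exact key (LinearMap.proj ⟨s, hs⟩)

/-- A function of class `C²` near a closed ball agrees there with a global compactly supported
one. -/
theorem exists_contDiff_eqOn_closedBall {Ω : Set (Evec m)} (hΩ : IsOpen Ω) {c : Evec m → ℝ}
    (hc : ContDiffOn ℝ 2 c Ω) {a : Evec m} {r : ℝ} (hr : 0 < r) (hsub : closedBall a r ⊆ Ω) :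
    ∃ d : Evec m → ℝ, ContDiff ℝ 2 d ∧ HasCompactSupport d ∧ Set.EqOn d c (closedBall a r) := by
  obtain ⟨δ, hδ, hsubδ⟩ := (isCompact_closedBall a r).exists_cthickening_subset_open hΩ hsub
  rw [cthickening_closedBall hδ.le hr.le] at hsubδ
  let χ : ContDiffBump a := ⟨r, δ + r, hr, by linarith⟩
  refine ⟨fun x => χ x * c x, ?_, χ.hasCompactSupport.mul_right, fun x hx => ?_⟩
  · refine contDiff_iff_contDiffAt.2 fun x => ?_
    by_cases hx : x ∈ tsupport χ
    · rw [χ.tsupport_eq] at hx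
      exact χ.contDiff.contDiffAt.mul (hc.contDiffAt (hΩ.mem_nhds (hsubδ hx)))
    · refine (contDiffAt_const (c := (0 : ℝ))).congr_of_eventuallyEq ?_
      filter_upwards [notMem_tsupport_iff_eventuallyEq.1 hx] with y hy
      simp [hy]
  · simp [χ.one_of_mem_closedBall hx]

end Coefficients

section Cauchy

open scoped ContDiff Convolution
open MvPolynomial (monomial pderiv)

variable {m : ℕ}

theorem exists_abs_eval_le (p : MvPolynomial (Fin m) ℝ) :
    ∃ M : ℝ, 0 ≤ M ∧ ∀ u ∈ closedBall (0 : Evec m) 1, |MvPolynomial.eval (fun i => u i) p| ≤ M := by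
  obtain ⟨M, hM⟩ := (isCompact_closedBall (0 : Evec m) 1).exists_bound_of_continuousOn
    (continuous_eval p).continuousOn
  exact ⟨M, (norm_nonneg _).trans (hM 0 (by simp)), hM⟩

theorem integrableOn_setIntegral_ball {G : Evec m → Evec m → ℝ}
    (hG : Continuous fun p : Evec m × Evec m => G p.1 p.2) (a b : Evec m) (r t : ℝ) :
    IntegrableOn (fun x => ∫ u in ball b t, G x u) (ball a r) := by
  refine Integrable.integral_prod_left (f := fun p : Evec m × Evec m => G p.1 p.2) ?_
  rw [Measure.prod_restrict, ← Measure.volume_eq_prod]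
  exact (hG.continuousOn.integrableOn_compact
    ((isCompact_closedBall a r).prod (isCompact_closedBall b t))).mono_set
    (Set.prod_mono ball_subset_closedBall ball_subset_closedBall)

/-- Global coefficient functions for a solution near a closed ball. -/
theorem C2Hk.exists_contDiff_coeff {k : ℕ} {Ω : Set (Evec m)} {f : Evec m → Evec m → ℝ}
    (hf : C2Hk m k Ω f) (hΩ : IsOpen Ω) {a : Evec m} {r : ℝ} (hr : 0 < r)
    (hsub : closedBall a r ⊆ Ω) :
    ∃ d : (Fin m →₀ ℕ) → Evec m → ℝ, (∀ s, ContDiff ℝ 2 (d s)) ∧ (∀ s, HasCompactSupport (d s)) ∧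
      ∀ x ∈ closedBall a r, ∀ u ∈ closedBall (0 : Evec m) 1, f x u =
        ∑ s ∈ exponents m k, d s x * MvPolynomial.eval (fun i => u i) (monomial s 1) := by
  obtain ⟨c, hc, hfc⟩ := hf.exists_coeff
  have hd : ∀ s, ∃ d : Evec m → ℝ, ContDiff ℝ 2 d ∧ HasCompactSupport d ∧
      (s ∈ exponents m k → Set.EqOn d (c s) (closedBall a r)) := by
    intro s
    by_cases hs : s ∈ exponents m k
    · obtain ⟨d, h1, h2, h3⟩ := exists_contDiff_eqOn_closedBall hΩ (hc s hs) hr hsub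
      exact ⟨d, h1, h2, fun _ => h3⟩
    · exact ⟨0, contDiff_const, HasCompactSupport.zero, fun h => absurd h hs⟩
  choose d h1 h2 h3 using hd
  refine ⟨d, h1, h2, fun x hx u hu => ?_⟩
  rw [hfc x (hsub hx) u hu]
  exact Finset.sum_congr rfl fun s hs => by rw [h3 s hs hx]

/-- The coefficients of a solution of the bosonic Laplace equation are reproduced by the
polyharmonic mollifier. -/
theorem eq_convolution_mollifier (hm : 4 < m) {k : ℕ} {φ ψ : Evec m → ℝ} {κ : ℝ}
    (hφ : ContDiff ℝ ∞ φ) (hψ : ContDiff ℝ ∞ ψ) (hφs : tsupport φ ⊆ closedBall 0 1)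
    (hψs : tsupport ψ ⊆ closedBall 0 1) (hφ1 : ∫ y, φ y = 1)
    (hφψ : ∀ y, m * φ y + fderiv ℝ φ y y = κ * lapl^[k + 1] ψ y)
    {f : Evec m → Evec m → ℝ} {a : Evec m} {r : ℝ} (hr : 0 < r)
    (hD : ∀ x ∈ ball a r, ∀ u ∈ ball (0 : Evec m) 1, Dk m k f x u = 0)
    {d : (Fin m →₀ ℕ) → Evec m → ℝ} (hd : ∀ s, ContDiff ℝ 2 (d s))
    (hds : ∀ s, HasCompactSupport (d s))
    (hrep : HasRep (ball a r) (exponents m k) f d fun s => monomial s 1)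
    {s : Fin m →₀ ℕ} (hs : s ∈ exponents m k) {b : Evec m} (hb : b ∈ ball a (r / 2)) :
    d s b = (d s ⋆[ContinuousLinearMap.mul ℝ ℝ] mollifier φ (r / 2)) b := by
  rw [convolution_eq_swap]
  refine eq_integral_mollifier hφ hψ hφs hψs hφ1 hφψ (hd s).continuous (hds s) b (half_pos hr)
    fun η hη hηs => ?_
  refine integral_mul_lapl_iterate_eq_zero hm k (exponents m k) (fun s hs => mem_exponents.1 hs) d hd
    b (r / 2) (fun x hx u hu => ?_) hη hηs hs
  have hx' : x ∈ ball a r := by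
    rw [mem_ball] at hb ⊢
    rw [mem_closedBall] at hx
    linarith [dist_triangle x b a]
  exact hrep.sum_bosonicCoeff_eq_zero isOpen_ball hd hx' hu (hD x hx' u hu)

/-- Bound of the coefficients of a solution by the `L¹` norm of the solution. -/
theorem setIntegral_abs_coeff_le {S : Finset (Fin m →₀ ℕ)} {C : ℝ}
    (hC : ∀ q : (Fin m →₀ ℕ) → ℝ, ∀ s ∈ S, |q s| ≤ C * ∫ u in ball (0 : Evec m) (3 / 4),
      |∑ s ∈ S, q s * MvPolynomial.eval (fun i => u i) (monomial s 1)|) (hC0 : 0 ≤ C)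
    {f : Evec m → Evec m → ℝ} {a : Evec m} {r ρ : ℝ} (hr : 0 < r) (hρ : 3 / 4 ≤ ρ) (hρ1 : ρ ≤ 1)
    {d : (Fin m →₀ ℕ) → Evec m → ℝ} (hd : ∀ s, Continuous (d s))
    (hrep : ∀ x ∈ closedBall a r, ∀ u ∈ closedBall (0 : Evec m) 1, f x u =
        ∑ s ∈ S, d s x * MvPolynomial.eval (fun i => u i) (monomial s 1))
    {s : Fin m →₀ ℕ} (hs : s ∈ S) :
    ∫ x in closedBall a (r / 2), |d s x|
      ≤ C * ∫ x in ball a r, ∫ u in ball (0 : Evec m) ρ, |f x u| := by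
  set G : Evec m → Evec m → ℝ := fun x u =>
    |∑ s ∈ S, d s x * MvPolynomial.eval (fun i => u i) (monomial s 1)| with hGdef
  have hG : Continuous fun p : Evec m × Evec m => G p.1 p.2 :=
    (continuous_finsetSum _ fun s _ => ((hd s).comp continuous_fst).mul
      ((continuous_eval _).comp continuous_snd)).abs
  have hGu : ∀ x, Continuous (G x) := fun x => hG.comp (by fun_prop : Continuous fun u => (x, u))
  have hfG : ∫ x in ball a r, ∫ u in ball (0 : Evec m) ρ, |f x u|
      = ∫ x in ball a r, ∫ u in ball (0 : Evec m) ρ, G x u := by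
    refine setIntegral_congr_fun measurableSet_ball fun x hx => ?_
    refine setIntegral_congr_fun measurableSet_ball fun u hu => ?_
    simp only [hGdef]
    rw [hrep x (ball_subset_closedBall hx) u (closedBall_subset_closedBall hρ1
      (ball_subset_closedBall hu))]
  have hintegral : IntegrableOn (fun x => |d s x|) (ball a r) :=
    integrableOn_ball_of_continuous (hd s).abs a r
  rw [hfG, ← integral_const_mul]
  refine (setIntegral_mono_set hintegral (Eventually.of_forall fun x => abs_nonneg _)
    (closedBall_subset_ball (half_lt_self hr)).eventuallyLE).trans ?_
  refine setIntegral_mono_on hintegral ((integrableOn_setIntegral_ball hG a 0 r ρ).const_mul C)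
    measurableSet_ball fun x _ => ?_
  refine (hC (fun s => d s x) s hs).trans (mul_le_mul_of_nonneg_left ?_ hC0)
  exact setIntegral_mono_set (integrableOn_ball_of_continuous (hGu x) 0 ρ)
    (Eventually.of_forall fun u => abs_nonneg _) (ball_subset_ball hρ).eventuallyLE

end Cauchy

/-- Cauchy's estimates with the `L¹` norm, `m > 4`, with a constant
depending only on `α`, `β`, `m`, `k`; here `r₂ = 1 - ‖ν₀‖`. -/
theorem stmt_16 (m k : ℕ) (hm : 4 < m) (hk : 1 ≤ k) (α β : Fin m → ℕ) :
    ∃ c : ℝ, 0 < c ∧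
      ∀ Ω : Set (Evec m), IsOpen Ω →
        ∀ f : Evec m → Evec m → ℝ, C2Hk m k Ω f →
          (∀ x ∈ Ω, ∀ u ∈ ball (0 : Evec m) 1, Dk m k f x u = 0) →
          ∀ (a : Evec m) (r₁ : ℝ), 0 < r₁ → closedBall a r₁ ⊆ Ω →
            ∀ ν₀ : Evec m, ‖ν₀‖ < 1 →
              |Dv β (Dx α f) a ν₀| ≤
                c * (∫ x in ball a r₁,
                      ∫ ν in ball (0 : Evec m) (1 - (1 - ‖ν₀‖) / 4), |f x ν|) /
                  (r₁ ^ (m + ∑ i, α i) * (1 - ‖ν₀‖) ^ (m + ∑ i, β i)) := by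
  obtain ⟨φ, ψ, κ, hφ, hψ, hφs, hψs, hφ1, hφψ⟩ := exists_polyharmonic_kernel m k
  obtain ⟨C₁, hC₁, hder⟩ := exists_abs_multiIter_pdv_convolution_le hφ hφs α
  obtain ⟨C₂, hC₂, hcoeff⟩ := exists_abs_coeff_le (exponents m k)
  choose M hM0 hM using fun s : Fin m →₀ ℕ => exists_abs_eval_le
    (multiIter (fun j (p : MvPolynomial (Fin m) ℝ) => MvPolynomial.pderiv j p) β
      (MvPolynomial.monomial s 1))
  have hsum : 0 ≤ ∑ s ∈ exponents m k, C₁ * 2 ^ (m + ∑ i, α i) * C₂ * M s :=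
    Finset.sum_nonneg fun s _ => mul_nonneg (by positivity) (hM0 s)
  refine ⟨1 + ∑ s ∈ exponents m k, C₁ * 2 ^ (m + ∑ i, α i) * C₂ * M s, by linarith,
    fun Ω hΩ f hf hD a r hr hsub ν hν => ?_⟩
  obtain ⟨d, hd, hds, hrep⟩ := hf.exists_contDiff_coeff hΩ hr hsub
  have hrepB : HasRep (ball a r) (exponents m k) f d fun s => MvPolynomial.monomial s 1 :=
    fun x hx u hu => hrep x (ball_subset_closedBall hx) u (ball_subset_closedBall hu)
  have hrepH : HasRep (ball a (r / 2)) (exponents m k) f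
      (fun s => convolution (d s) (mollifier φ (r / 2)) (ContinuousLinearMap.mul ℝ ℝ) volume)
      fun s => MvPolynomial.monomial s 1 := by
    intro x hx u hu
    rw [hrepB x (ball_subset_ball (half_le_self hr.le) hx) u hu]
    exact Finset.sum_congr rfl fun s hs => by
      rw [eq_convolution_mollifier hm hφ hψ hφs hψs hφ1 hφψ hr
        (fun x hx => hD x (hsub (ball_subset_closedBall hx))) hd hds hrepB hs hx]
  have hval := ((hrepH.Dx isOpen_ball (fun s =>
    (hasCompactSupport_mollifier hφs (half_pos hr)).contDiff_convolution_right _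
      (hd s).continuous.locallyIntegrable (contDiff_mollifier hφ _)) α).Dv β) a
    (mem_ball_self (half_pos hr)) ν (mem_ball_zero_iff.2 hν)
  set J := ∫ x in ball a r, ∫ u in ball (0 : Evec m) (1 - (1 - ‖ν‖) / 4), |f x u| with hJ
  have hJ0 : 0 ≤ J := integral_nonneg fun x => integral_nonneg fun u => abs_nonneg _
  have hν0 := norm_nonneg ν
  have hterm : ∀ s ∈ exponents m k,
      |multiIter pdv α (convolution (d s) (mollifier φ (r / 2)) (ContinuousLinearMap.mul ℝ ℝ)
        volume) a * MvPolynomial.eval (fun i => ν i)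
          (multiIter (fun j p => MvPolynomial.pderiv j p) β (MvPolynomial.monomial s 1))|
      ≤ C₁ * 2 ^ (m + ∑ i, α i) * C₂ * M s * (J / r ^ (m + ∑ i, α i)) := by
    intro s hs
    rw [abs_mul]
    have h1 := hder (d s) (hd s).continuous a (r / 2) (half_pos hr)
    have h2 := setIntegral_abs_coeff_le hcoeff hC₂ hr (ρ := 1 - (1 - ‖ν‖) / 4) (by linarith)
      (by linarith) (fun s => (hd s).continuous) hrep hs
    have h3 := hM s ν (mem_closedBall_zero_iff.2 hν.le)
    calc _ ≤ C₁ * (r / 2)⁻¹ ^ (m + ∑ i, α i) * (C₂ * J) * M s := by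
          refine mul_le_mul (h1.trans ?_) h3 (abs_nonneg _) (by positivity)
          exact mul_le_mul_of_nonneg_left h2 (by positivity)
      _ = _ := by
          rw [inv_div, div_pow]
          ring
  have hbound : |Dv β (Dx α f) a ν| ≤
      (1 + ∑ s ∈ exponents m k, C₁ * 2 ^ (m + ∑ i, α i) * C₂ * M s)
        * (J / r ^ (m + ∑ i, α i)) := by
    rw [hval]
    refine (Finset.abs_sum_le_sum_abs _ _).trans ((Finset.sum_le_sum hterm).trans ?_)
    rw [← Finset.sum_mul]
    exact mul_le_mul_of_nonneg_right (by linarith) (by positivity)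
  refine hbound.trans ?_
  rw [← mul_div_assoc]
  refine div_le_div_of_nonneg_left (mul_nonneg (by linarith) hJ0)
    (mul_pos (pow_pos hr _) (pow_pos (by linarith) _)) ?_
  exact mul_le_of_le_one_right (by positivity) (pow_le_one₀ (by linarith) (by linarith))
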